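/- arXiv:2110.07854 — 2 statements merged into one kernel-verified Lean document; each statement's English description precedes it below -/
import Mathlib

section
/- (qth Power Law.) For every prime p, every real β > 0, and every f ∈ ℂ, the series Z(f, ℤ_p, β) and Z(f, pℤ_p, β) converge absolutely and satisfy Z(f, ℤ_p, β) = (Z(f, pℤ_p, β))^p. -/
open MeasureTheory
open scoped LinearAlgebra.Projectivization

namespace LogCoulomb

noncomputable section

/-! ### The projective line over `ℚ_p`, its spherical metric and `PGL₂`-invariant measure -/

variable (p : ℕ) [Fact p.Prime]

instance : MeasurableSpace ℚ_[p] := borel _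
instance : BorelSpace ℚ_[p] := ⟨rfl⟩

/-- The projective line over `ℚ_p`. -/
abbrev P1 := ℙ ℚ_[p] (Fin 2 → ℚ_[p])

instance : TopologicalSpace (P1 p) :=
  inferInstanceAs (TopologicalSpace (Quotient _))

instance : MeasurableSpace (P1 p) := borel _
instance : BorelSpace (P1 p) := ⟨rfl⟩

/-- Spherical distance on homogeneous coordinates:
`δ((x₀,x₁),(y₀,y₁)) = |x₀y₁ - x₁y₀| / (max(|x₀|,|x₁|) ⬝ max(|y₀|,|y₁|))`. -/
def sdelta (x y : Fin 2 → ℚ_[p]) : ℝ :=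
  ‖x 0 * y 1 - x 1 * y 0‖ / (max ‖x 0‖ ‖x 1‖ * max ‖y 0‖ ‖y 1‖)

/-- The spherical metric on `ℙ¹(ℚ_p)`, defined via the canonical representatives. -/
def pdelta (ξ η : P1 p) : ℝ := sdelta p ξ.rep η.rep

open Classical in
/-- The action of a matrix on `ℙ¹(ℚ_p)`: `[x₀:x₁] ↦ [a x₀ + b x₁ : c x₀ + d x₁]`
(well-defined, and given by the first branch of the `if`, whenever `A` is invertible). -/
def mobius (A : Matrix (Fin 2) (Fin 2) ℚ_[p]) (ξ : P1 p) : P1 p :=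
  if h : A.mulVec ξ.rep ≠ 0 then Projectivization.mk ℚ_[p] (A.mulVec ξ.rep) h else ξ

/-- `ν` is invariant under the action of `GL₂(ℤ_p)` on `ℙ¹(ℚ_p)`; membership of the matrix
entries in `ℤ_p`, and invertibility of the matrix over `ℤ_p`, are phrased via the `p`-adic
norm on `ℚ_p`. -/
def IsGLInvariant (ν : Measure (P1 p)) : Prop :=
  ∀ A : Matrix (Fin 2) (Fin 2) ℚ_[p],
    (∀ i j, ‖A i j‖ ≤ 1) → ‖A.det‖ = 1 →
      ∀ M : Set (P1 p), MeasurableSet M → ν (mobius p A '' M) = ν M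

/-- The embedding `ι : ℚ_p → ℙ¹(ℚ_p)`, `x ↦ [x : 1]`. -/
def iota (x : ℚ_[p]) : P1 p :=
  Projectivization.mk ℚ_[p] ![x, 1] (by
    intro h
    have h1 := congrFun h 1
    simp at h1)

/-! ### Canonical partition functions -/

/-- The pairs `(i,j)` with `i < j`. -/
def pairs (N : ℕ) : Finset (Fin N × Fin N) := Finset.univ.filter fun q => q.1 < q.2

/-- The closed unit ball `ℤ_p = R` inside `ℚ_p`. -/
def Zball : Set ℚ_[p] := {x | ‖x‖ ≤ 1}

/-- The open unit ball `pℤ_p = P` inside `ℚ_p`. -/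
def Pball : Set ℚ_[p] := {x | ‖x‖ < 1}

/-- The one-component canonical partition function
`Z_N(X, β) = ∫_{X^N} ∏_{i<j} |x_i - x_j|^β dμ^N` (as a Bochner integral, whether or not it
converges absolutely). -/
def ZN (μ : Measure ℚ_[p]) [SigmaFinite μ] (X : Set ℚ_[p]) (N : ℕ) (β : ℂ) : ℂ :=
  ∫ x : Fin N → ℚ_[p], ∏ q ∈ pairs N, (‖x q.1 - x q.2‖ : ℂ) ^ β
    ∂(Measure.pi fun _ => μ.restrict X)

/-- The multivariate canonical partition function
`𝒵_I(X, s) = ∫_{X^I} ∏_{i<j, i,j ∈ I} |x_i - x_j|^{s_{ij}} dμ^I` for a subset `I ⊆ [N]`. -/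
def ZI (μ : Measure ℚ_[p]) [SigmaFinite μ] (X : Set ℚ_[p]) {N : ℕ} (I : Finset (Fin N))
    (s : Fin N → Fin N → ℂ) : ℂ :=
  ∫ x : I → ℚ_[p],
    ∏ q ∈ Finset.univ.filter (fun q : (↥I) × (↥I) => (q.1 : Fin N) < (q.2 : Fin N)),
      (‖x q.1 - x q.2‖ : ℂ) ^ s q.1.1 q.2.1
    ∂(Measure.pi fun _ => μ.restrict X)

/-- The multivariate canonical partition function
`𝒵_N(ℙ¹(ℚ_p), s) = ∫_{(ℙ¹(ℚ_p))^N} ∏_{i<j} δ(ξ_i,ξ_j)^{s_{ij}} dν^N`. -/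
def ZP1s (ν : Measure (P1 p)) [SigmaFinite ν] (N : ℕ) (s : Fin N → Fin N → ℂ) : ℂ :=
  ∫ x : Fin N → P1 p, ∏ q ∈ pairs N, ((pdelta p (x q.1) (x q.2) : ℝ) : ℂ) ^ s q.1 q.2
    ∂(Measure.pi fun _ => ν)

/-- The one-component canonical partition function `Z_N(ℙ¹(ℚ_p), β)`. -/
def ZP1 (ν : Measure (P1 p)) [SigmaFinite ν] (N : ℕ) (β : ℂ) : ℂ :=
  ∫ x : Fin N → P1 p, ∏ q ∈ pairs N, ((pdelta p (x q.1) (x q.2) : ℝ) : ℂ) ^ β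
    ∂(Measure.pi fun _ => ν)

/-! ### The quadratic recurrence -/

/-- The factor `ρ_{N,k}(t,β)` appearing in the quadratic recurrence; here
`N.choose 2 = N(N-1)/2`. -/
def rho (N k : ℕ) (t : ℝ) (β : ℂ) : ℂ :=
  if t = 0 then
    (((N : ℂ) + (N.choose 2 : ℂ) * β) * (1 - 2 * (k : ℂ) / (N : ℂ)) + 1) /
      (((N : ℂ) + (N.choose 2 : ℂ) * β) - 1)
  else
    Complex.sinh (((t : ℂ) / 2) * (((N : ℂ) + (N.choose 2 : ℂ) * β) * (1 - 2 * (k : ℂ) / (N : ℂ)) + 1)) /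
      Complex.sinh (((t : ℂ) / 2) * (((N : ℂ) + (N.choose 2 : ℂ) * β) - 1))

/-- The quadratic recurrence: `F 0 = F 1 = 1` and
`F N t β = ∑_{k=1}^{N-1} (k/N) ρ_{N,k}(t,β) F_{N-k}(t,β) F_k(t,β)` for `N ≥ 2`. -/
def F : ℕ → ℝ → ℂ → ℂ
  | 0, _, _ => 1
  | 1, _, _ => 1
  | N + 2, t, β =>
    ∑ k ∈ (Finset.Icc 1 (N + 1)).attach,
      (((k : ℕ) : ℂ) / ((N : ℂ) + 2)) * rho (N + 2) k t β *
        F (N + 2 - (k : ℕ)) t β * F (k : ℕ) t β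
  decreasing_by
  all_goals
    have hk := Finset.mem_Icc.mp k.2
    omega

/-! ### Splitting chains -/

/-- A splitting chain `Λ_0 > Λ_1 > ⋯ > Λ_L` of set partitions of the subset `I ⊆ [N]`,
beginning with the trivial partition `{I}` and ending with the partition of `I` into
singletons.  (The values `Λ ℓ` for `ℓ > L` are required to be `∅`, so that a chain is
determined by the genuine data `Λ_0, …, Λ_L`.) -/
structure SplChain (N : ℕ) (I : Finset (Fin N)) where
  L : ℕ
  Λ : ℕ → Finset (Finset (Fin N))
  nonempty_mem : ∀ ℓ ≤ L, ∀ B ∈ Λ ℓ, B.Nonempty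
  subset_mem : ∀ ℓ ≤ L, ∀ B ∈ Λ ℓ, B ⊆ I
  cover : ∀ ℓ ≤ L, ∀ i ∈ I, ∃! B, B ∈ Λ ℓ ∧ i ∈ B
  first : Λ 0 = {I}
  last : Λ L = I.image fun i => {i}
  refines : ∀ ℓ < L, ∀ B ∈ Λ (ℓ + 1), ∃ C ∈ Λ ℓ, B ⊆ C
  strict : ∀ ℓ < L, Λ (ℓ + 1) ≠ Λ ℓ
  trailing : ∀ ℓ, L < ℓ → Λ ℓ = ∅

variable {N : ℕ} {I : Finset (Fin N)}

/-- The branches of a splitting chain: the non-singleton parts,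
`ℬ(𝔖) = (Λ_0 ∪ ⋯ ∪ Λ_{L-1}) \ Λ_L`. -/
def SplChain.branches (S : SplChain N I) : Finset (Finset (Fin N)) :=
  ((Finset.range S.L).biUnion S.Λ) \ S.Λ S.L

/-- The depth `ℓ_𝔖(λ) = max {ℓ : λ ∈ Λ_ℓ}` of a branch. -/
def SplChain.depth (S : SplChain N I) (lam : Finset (Fin N)) : ℕ :=
  ((Finset.range (S.L + 1)).filter fun ℓ => lam ∈ S.Λ ℓ).sup id

/-- The degree `deg_𝔖(λ) = #{λ' ∈ Λ_{ℓ_𝔖(λ)+1} : λ' ⊆ λ}` of a branch. -/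
def SplChain.degree (S : SplChain N I) (lam : Finset (Fin N)) : ℕ :=
  ((S.Λ (S.depth lam + 1)).filter fun lam' => lam' ⊆ lam).card

/-- A splitting chain is reduced if every branch appears in exactly one partition of the
chain (namely the one at its depth). -/
def SplChain.Reduced (S : SplChain N I) : Prop :=
  ∀ lam ∈ S.branches, ∀ ℓ ≤ S.L, (lam ∈ S.Λ ℓ ↔ ℓ = S.depth lam)

/-- `e_λ(s) = #λ - 1 + ∑_{i<j, i,j ∈ λ} s_{ij}`. -/
def eexp (lam : Finset (Fin N)) (s : Fin N → Fin N → ℂ) : ℂ :=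
  (lam.card : ℂ) - 1 + ∑ q ∈ (pairs N).filter fun q => q.1 ∈ lam ∧ q.2 ∈ lam, s q.1 q.2

/-- Membership in `Ω_I`: `Re e_λ(s) > 0` for every `λ ⊆ I` with `#λ > 1`. -/
def InOmega (I : Finset (Fin N)) (s : Fin N → Fin N → ℂ) : Prop :=
  ∀ lam ⊆ I, 1 < lam.card → 0 < (eexp lam s).re


/-- The multivariate canonical partition function `𝒵_N(ℤ_p, s)` over `Fin N`-indexed tuples. -/
def ZNs (μ : Measure ℚ_[p]) [SigmaFinite μ] (X : Set ℚ_[p]) (N : ℕ)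
    (s : Fin N → Fin N → ℂ) : ℂ :=
  ∫ x : Fin N → ℚ_[p], ∏ q ∈ pairs N, (‖x q.1 - x q.2‖ : ℂ) ^ s q.1 q.2
    ∂(Measure.pi fun _ => μ.restrict X)

/-- The ball `p^v ℤ_p = {x : |x| ≤ p^{-v}}` in `ℚ_p`. -/
def pvball (v : ℤ) : Set ℚ_[p] := {x | ‖x‖ ≤ (p : ℝ) ^ (-v)}

/-- `G_N(q,β) = N! q^{(1/2)(N choose 2)β} F_N(log q, β)`. -/
def GN (N : ℕ) (β : ℂ) (q : ℝ) : ℂ :=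
  (N.factorial : ℂ) * (q : ℂ) ^ ((N.choose 2 : ℂ) * β / 2) * F N (Real.log q) β

/-- `H_N(q,β)`, the efficient formula for `Z_N(ℙ¹(K),β)` as a function of `q`. -/
def HN (N : ℕ) (β : ℂ) (q : ℝ) : ℂ :=
  (N.factorial : ℂ) * ∑ k ∈ Finset.range (N + 1),
    Complex.cosh (((Real.log q : ℂ) / 2) * ((N : ℂ) + (N.choose 2 : ℂ) * β) *
          (1 - 2 * (k : ℂ) / (N : ℂ))) /
        (2 * Complex.cosh ((Real.log q : ℂ) / 2)) ^ N *
      F (N - k) (Real.log q) β * F k (Real.log q) β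

end

/-!
Points in distinct cosets of `pℤ_p` in `ℤ_p` are at distance exactly `1`, so particles in different
cosets contribute trivial factors `1 ^ β` to the Boltzmann weight. Over a disjoint union of two
regions that do not interact in this sense, sorting the `N`-particle integral by the set of
particles lying in the first region gives a binomial convolution; dividing by `N!` turns it into a
Cauchy product, so the grand canonical partition function is multiplicative. The `p` cosets are
translates of `pℤ_p`, and translation preserves both the measure and the interaction, whence the
`p`-th power. Absolute convergence is comparison with the exponential series, since the weight is
bounded by `1`.
-/

section PiMeasure

variable {ι : Type*} [Fintype ι] {α : ι → Type*} [∀ i, MeasurableSpace (α i)]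

theorem measure_pi_add_eq_sum_ite [DecidableEq ι] (μ ν : ∀ i, Measure (α i))
    [∀ i, SigmaFinite (μ i)] [∀ i, SigmaFinite (ν i)] :
    Measure.pi (fun i => μ i + ν i) =
      ∑ s : Finset ι, Measure.pi fun i => if i ∈ s then μ i else ν i := by
  have hσ (s : Finset ι) (i : ι) : SigmaFinite (if i ∈ s then μ i else ν i) := by
    split_ifs <;> infer_instance
  refine Measure.pi_eq fun t _ => ?_
  simp only [Measure.finsetSum_apply, Measure.pi_pi, Measure.add_apply, Fintype.prod_add]
  refine Finset.sum_congr rfl fun s _ => ?_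
  rw [← Finset.prod_mul_prod_compl s]
  congr 1
  · exact Finset.prod_congr rfl fun i hi => by rw [if_pos hi]
  · exact Finset.prod_congr rfl fun i hi => by rw [if_neg (Finset.mem_compl.1 hi)]

theorem ae_pi_restrict_forall_mem (μ : ∀ i, Measure (α i)) {X : ∀ i, Set (α i)}
    [∀ i, SigmaFinite ((μ i).restrict (X i))] (hX : ∀ i, MeasurableSet (X i)) :
    ∀ᵐ x ∂Measure.pi fun i => (μ i).restrict (X i), ∀ i, x i ∈ X i :=
  ae_all_iff.2 fun i => (Measure.quasiMeasurePreserving_eval _ i).ae (ae_restrict_mem (hX i))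

end PiMeasure

theorem prod_prod_eq_mul_of_eq_one_across {ι M : Type*} [Fintype ι] [CommMonoid M]
    (P : ι → Prop) [DecidablePred P] (φ : ι → ι → M)
    (hφ : ∀ i j, P i → ¬P j → φ i j = 1 ∧ φ j i = 1) :
    ∏ i, ∏ j, φ i j =
      (∏ i : {i // P i}, ∏ j : {j // P j}, φ i j) *
        ∏ i : {i // ¬P i}, ∏ j : {j // ¬P j}, φ i j := by
  rw [← Fintype.prod_subtype_mul_prod_subtype P]
  congr 1 <;> refine Finset.prod_congr rfl fun i _ => ?_ <;>
    rw [← Fintype.prod_subtype_mul_prod_subtype P]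
  · rw [Finset.prod_eq_one (s := (Finset.univ : Finset {j // ¬P j}))
      fun j _ => (hφ i j i.2 j.2).1, mul_one]
  · rw [Finset.prod_eq_one (s := (Finset.univ : Finset {j // P j}))
      fun j _ => (hφ j i j.2 i.2).2, one_mul]

section BoltzmannWeight

variable {α ι κ : Type*} [Fintype ι] [LinearOrder ι] [Fintype κ] [LinearOrder κ]
  {K : α → α → ℂ}

/-- The Boltzmann weight `∏_{i<j} K(x_i, x_j)` of a configuration `x` of particles with pair
interaction `K`. Particles are labelled by a finite linear order, so that labels can be split
into subsets and no symmetry of `K` is needed. -/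
def boltzmannWeight (K : α → α → ℂ) (x : ι → α) : ℂ :=
  ∏ q : ι × ι with q.1 < q.2, K (x q.1) (x q.2)

/-- Points of `A` do not interact with points of `B`: in either order the pair factor is `1`. -/
def NonInteracting (K : α → α → ℂ) (A B : Set α) : Prop :=
  ∀ a ∈ A, ∀ b ∈ B, K a b = 1 ∧ K b a = 1

theorem boltzmannWeight_eq_prod_prod_ite (x : ι → α) :
    boltzmannWeight K x = ∏ i, ∏ j, if i < j then K (x i) (x j) else 1 := by
  rw [boltzmannWeight, Finset.prod_filter, Fintype.prod_prod_type]

theorem boltzmannWeight_comp_orderIso (e : ι ≃o κ) (x : κ → α) :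
    boltzmannWeight K (x ∘ e) = boltzmannWeight K x := by
  simp only [boltzmannWeight_eq_prod_prod_ite, ← e.toEquiv.prod_comp (M := ℂ),
    RelIso.coe_fn_toEquiv, e.lt_iff_lt, Function.comp_apply]

theorem NonInteracting.boltzmannWeight_eq_mul {A B : Set α} (hAB : NonInteracting K A B)
    (P : ι → Prop) [DecidablePred P] {x : ι → α} (hA : ∀ i, P i → x i ∈ A)
    (hB : ∀ i, ¬P i → x i ∈ B) :
    boltzmannWeight K x =
      boltzmannWeight K (fun i : {i // P i} => x i) *
        boltzmannWeight K (fun i : {i // ¬P i} => x i) := by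
  simp only [boltzmannWeight_eq_prod_prod_ite]
  refine prod_prod_eq_mul_of_eq_one_across P (fun i j => if i < j then K (x i) (x j) else 1)
    fun i j hi hj => ?_
  obtain ⟨hij, hji⟩ := hAB _ (hA i hi) _ (hB j hj)
  simp only [hij, hji, ite_self, and_self]

theorem norm_boltzmannWeight_le_one {X : Set α} (hK : ∀ a ∈ X, ∀ b ∈ X, ‖K a b‖ ≤ 1)
    {x : ι → α} (hx : ∀ i, x i ∈ X) : ‖boltzmannWeight K x‖ ≤ 1 := by
  rw [boltzmannWeight, norm_prod]
  exact Finset.prod_le_one (fun _ _ => norm_nonneg _) fun q _ => hK _ (hx q.1) _ (hx q.2)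

theorem measurable_boltzmannWeight [MeasurableSpace α]
    (hK : Measurable (Function.uncurry K)) :
    Measurable (boltzmannWeight K : (ι → α) → ℂ) :=
  Finset.measurable_prod _ fun q _ =>
    hK.comp (f := fun x : ι → α => (x q.1, x q.2))
      ((measurable_pi_apply q.1).prodMk (measurable_pi_apply q.2))

end BoltzmannWeight

section CanonicalPartition

variable {α ι κ : Type*} [MeasurableSpace α] [Fintype ι] [LinearOrder ι] [Fintype κ]
  [LinearOrder κ] {K : α → α → ℂ} {μ : Measure α} {A B X : Set α}

/-- The canonical partition function of a gas with pair interaction `K` and particles labelled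
by `ι`, each distributed according to `μ`. Confinement to a region `X` is encoded by taking
`μ.restrict X` for `μ`. -/
noncomputable def canonicalPartition (K : α → α → ℂ) (μ : Measure α) (ι : Type*) [Fintype ι]
    [LinearOrder ι] : ℂ :=
  ∫ x : ι → α, boltzmannWeight K x ∂Measure.pi fun _ => μ

theorem canonicalPartition_congr_orderIso [SigmaFinite μ] (e : ι ≃o κ) :
    canonicalPartition K μ ι = canonicalPartition K μ κ := by
  have he := measurePreserving_piCongrLeft (fun _ : κ => μ) e.toEquiv
  rw [canonicalPartition, canonicalPartition, ← he.integral_comp']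
  refine integral_congr_ae (.of_forall fun x => ?_)
  dsimp only
  rw [← boltzmannWeight_comp_orderIso e]
  congr 1
  ext i
  exact (Equiv.piCongrLeft_apply_apply (fun _ : κ => α) e.toEquiv x i).symm

theorem canonicalPartition_congr_card [SigmaFinite μ] (h : Fintype.card ι = Fintype.card κ) :
    canonicalPartition K μ ι = canonicalPartition K μ κ :=
  canonicalPartition_congr_orderIso <|
    (Fintype.orderIsoFinOfCardEq ι h).symm.trans (Fintype.orderIsoFinOfCardEq κ rfl)

theorem canonicalPartition_eq_of_measurePreserving {α' : Type*} [MeasurableSpace α']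
    {K' : α' → α' → ℂ} {μ' : Measure α'} [SigmaFinite μ']
    (hK' : Measurable (Function.uncurry K')) {g : α → α'} (hg : MeasurePreserving g μ μ')
    (hKg : ∀ a b, K' (g a) (g b) = K a b) :
    canonicalPartition K μ ι = canonicalPartition K' μ' ι := by
  have hpi : MeasurePreserving (fun (x : ι → α) i => g (x i)) (Measure.pi fun _ => μ)
      (Measure.pi fun _ => μ') :=
    measurePreserving_pi (fun _ : ι => μ) (fun _ => μ') fun _ => hg
  rw [canonicalPartition, canonicalPartition, ← hpi.map_eq,
    integral_map hpi.aemeasurable (measurable_boltzmannWeight hK').aestronglyMeasurable]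
  simp only [boltzmannWeight, hKg]

theorem integrable_boltzmannWeight (hX : MeasurableSet X) (hμX : μ X ≠ ⊤)
    (hKm : Measurable (Function.uncurry K)) (hK : ∀ a ∈ X, ∀ b ∈ X, ‖K a b‖ ≤ 1) :
    Integrable (boltzmannWeight K : (ι → α) → ℂ) (Measure.pi fun _ => μ.restrict X) := by
  have : IsFiniteMeasure (μ.restrict X) := isFiniteMeasure_restrict.2 hμX
  refine .of_bound (measurable_boltzmannWeight hKm).aestronglyMeasurable 1 ?_
  filter_upwards [ae_pi_restrict_forall_mem (fun _ : ι => μ) fun _ => hX] with x hx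
  exact norm_boltzmannWeight_le_one hK hx

theorem norm_canonicalPartition_le (hX : MeasurableSet X) (hμX : μ X ≠ ⊤)
    (hK : ∀ a ∈ X, ∀ b ∈ X, ‖K a b‖ ≤ 1) :
    ‖canonicalPartition K (μ.restrict X) ι‖ ≤ μ.real X ^ Fintype.card ι := by
  have : IsFiniteMeasure (μ.restrict X) := isFiniteMeasure_restrict.2 hμX
  have hbound : ∀ᵐ x ∂Measure.pi fun _ : ι => μ.restrict X, ‖boltzmannWeight K x‖ ≤ 1 := by
    filter_upwards [ae_pi_restrict_forall_mem (fun _ : ι => μ) fun _ => hX] with x hx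
    exact norm_boltzmannWeight_le_one hK hx
  have huniv : (Measure.pi fun _ : ι => μ.restrict X).real Set.univ =
      μ.real X ^ Fintype.card ι := by
    simp [measureReal_def, Measure.pi_univ]
  simpa only [one_mul, huniv, canonicalPartition] using norm_integral_le_of_norm_le_const hbound

theorem NonInteracting.integral_boltzmannWeight_ite [SigmaFinite (μ.restrict A)]
    [SigmaFinite (μ.restrict B)] (hAB : NonInteracting K A B) (hA : MeasurableSet A)
    (hB : MeasurableSet B) (P : ι → Prop) [DecidablePred P] :
    ∫ x, boltzmannWeight K x ∂Measure.pi (fun i => μ.restrict (if P i then A else B)) =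
      canonicalPartition K (μ.restrict A) (Fin (Fintype.card {i // P i})) *
        canonicalPartition K (μ.restrict B) (Fin (Fintype.card {i // ¬P i})) := by
  have hσ (i : ι) : SigmaFinite (μ.restrict (if P i then A else B)) := by
    split_ifs <;> infer_instance
  have hmeas (i : ι) : MeasurableSet (if P i then A else B) := by split_ifs <;> assumption
  have hsplit := measurePreserving_piEquivPiSubtypeProd
    (fun i => μ.restrict (if P i then A else B)) P
  have hpos (i : {i // P i}) : (if P i then A else B) = A := if_pos i.2
  have hneg (i : {i // ¬P i}) : (if P i then A else B) = B := if_neg i.2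
  simp only [hpos, hneg] at hsplit
  rw [← canonicalPartition_congr_card (ι := {i // P i}) (Fintype.card_fin _).symm,
    ← canonicalPartition_congr_card (ι := {i // ¬P i}) (Fintype.card_fin _).symm,
    canonicalPartition, canonicalPartition, ← integral_prod_mul, ← hsplit.integral_comp']
  refine integral_congr_ae ?_
  filter_upwards [ae_pi_restrict_forall_mem (fun _ => μ) hmeas] with x hx
  exact hAB.boltzmannWeight_eq_mul P (fun i hi => hpos ⟨i, hi⟩ ▸ hx i)
    fun i hi => hneg ⟨i, hi⟩ ▸ hx i

theorem NonInteracting.canonicalPartition_union_eq_sum_finset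
    (hAB : NonInteracting K A B) (hdisj : Disjoint A B) (hA : MeasurableSet A)
    (hB : MeasurableSet B) (hμ : μ (A ∪ B) ≠ ⊤) (hKm : Measurable (Function.uncurry K))
    (hK : ∀ a ∈ A ∪ B, ∀ b ∈ A ∪ B, ‖K a b‖ ≤ 1) :
    canonicalPartition K (μ.restrict (A ∪ B)) ι =
      ∑ s : Finset ι, canonicalPartition K (μ.restrict A) (Fin s.card) *
        canonicalPartition K (μ.restrict B) (Fin (Fintype.card ι - s.card)) := by
  have : IsFiniteMeasure (μ.restrict A) := isFiniteMeasure_restrict.2 <|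
    measure_ne_top_of_subset Set.subset_union_left hμ
  have : IsFiniteMeasure (μ.restrict B) := isFiniteMeasure_restrict.2 <|
    measure_ne_top_of_subset Set.subset_union_right hμ
  have hsum : Measure.pi (fun _ : ι => μ.restrict (A ∪ B)) =
      ∑ s : Finset ι, Measure.pi fun i => μ.restrict (if i ∈ s then A else B) := by
    simp only [Measure.restrict_union hdisj hB, measure_pi_add_eq_sum_ite, apply_ite]
  have hint := integrable_boltzmannWeight (ι := ι) (hA.union hB) hμ hKm hK
  rw [hsum, integrable_finsetSum_measure] at hint
  rw [canonicalPartition, hsum, integral_finsetSum_measure hint]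
  refine Finset.sum_congr rfl fun s _ => ?_
  rw [hAB.integral_boltzmannWeight_ite hA hB (· ∈ s), Fintype.card_subtype_compl,
    Fintype.card_coe, Fintype.card_of_subtype s fun _ => Iff.rfl]

theorem NonInteracting.canonicalPartition_union
    (hAB : NonInteracting K A B) (hdisj : Disjoint A B) (hA : MeasurableSet A)
    (hB : MeasurableSet B) (hμ : μ (A ∪ B) ≠ ⊤) (hKm : Measurable (Function.uncurry K))
    (hK : ∀ a ∈ A ∪ B, ∀ b ∈ A ∪ B, ‖K a b‖ ≤ 1) (N : ℕ) :
    canonicalPartition K (μ.restrict (A ∪ B)) (Fin N) =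
      ∑ k ∈ Finset.range (N + 1), N.choose k *
        (canonicalPartition K (μ.restrict A) (Fin k) *
          canonicalPartition K (μ.restrict B) (Fin (N - k))) := by
  have hcard := Finset.sum_powerset_apply_card
    (fun k => canonicalPartition K (μ.restrict A) (Fin k) *
      canonicalPartition K (μ.restrict B) (Fin (N - k))) (x := (Finset.univ : Finset (Fin N)))
  simp only [Finset.card_univ, Fintype.card_fin, nsmul_eq_mul, Finset.powerset_univ] at hcard
  rw [hAB.canonicalPartition_union_eq_sum_finset hdisj hA hB hμ hKm hK, ← hcard,
    Fintype.card_fin]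

end CanonicalPartition

section GrandCanonical

variable {α : Type*} [MeasurableSpace α] {K : α → α → ℂ} {μ : Measure α} {A B X : Set α}

/-- The `N`-particle term `Z_N f^N / N!` of the grand canonical partition function at
fugacity `f`. -/
noncomputable def grandCanonicalTerm (K : α → α → ℂ) (μ : Measure α) (f : ℂ) (N : ℕ) : ℂ :=
  canonicalPartition K μ (Fin N) * f ^ N / (N.factorial : ℂ)

/-- The grand canonical partition function `Z(f) = ∑_N Z_N f^N / N!` of a gas with pair
interaction `K` and one-particle distribution `μ`; it is `0` when the series diverges. -/
noncomputable def grandCanonical (K : α → α → ℂ) (μ : Measure α) (f : ℂ) : ℂ :=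
  ∑' N, grandCanonicalTerm K μ f N

theorem summable_norm_grandCanonicalTerm (hX : MeasurableSet X)
    (hμX : μ X ≠ ⊤) (hK : ∀ a ∈ X, ∀ b ∈ X, ‖K a b‖ ≤ 1) (f : ℂ) :
    Summable fun N => ‖grandCanonicalTerm K (μ.restrict X) f N‖ := by
  refine .of_nonneg_of_le (fun _ => norm_nonneg _) (fun N => ?_)
    (Real.summable_pow_div_factorial (μ.real X * ‖f‖))
  have hZ : ‖canonicalPartition K (μ.restrict X) (Fin N)‖ ≤ μ.real X ^ N := by
    simpa only [Fintype.card_fin] using norm_canonicalPartition_le (ι := Fin N) hX hμX hK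
  rw [grandCanonicalTerm, norm_div, norm_mul, norm_pow, Complex.norm_natCast, mul_pow]
  gcongr

theorem NonInteracting.grandCanonicalTerm_union
    (hAB : NonInteracting K A B) (hdisj : Disjoint A B) (hA : MeasurableSet A)
    (hB : MeasurableSet B) (hμ : μ (A ∪ B) ≠ ⊤) (hKm : Measurable (Function.uncurry K))
    (hK : ∀ a ∈ A ∪ B, ∀ b ∈ A ∪ B, ‖K a b‖ ≤ 1) (f : ℂ) (N : ℕ) :
    grandCanonicalTerm K (μ.restrict (A ∪ B)) f N =
      ∑ k ∈ Finset.range (N + 1), grandCanonicalTerm K (μ.restrict A) f k *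
        grandCanonicalTerm K (μ.restrict B) f (N - k) := by
  rw [grandCanonicalTerm, hAB.canonicalPartition_union hdisj hA hB hμ hKm hK, Finset.sum_mul,
    Finset.sum_div]
  refine Finset.sum_congr rfl fun k hk => ?_
  have hkN : k ≤ N := Finset.mem_range_succ_iff.1 hk
  have hpow : f ^ N = f ^ k * f ^ (N - k) := by rw [← pow_add, Nat.add_sub_cancel' hkN]
  have hfactorial (n : ℕ) : (n.factorial : ℂ) ≠ 0 := Nat.cast_ne_zero.2 n.factorial_ne_zero
  rw [grandCanonicalTerm, grandCanonicalTerm, Nat.cast_choose ℂ hkN, hpow]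
  field_simp [hfactorial]

theorem NonInteracting.grandCanonical_union
    (hAB : NonInteracting K A B) (hdisj : Disjoint A B) (hA : MeasurableSet A)
    (hB : MeasurableSet B) (hμ : μ (A ∪ B) ≠ ⊤) (hKm : Measurable (Function.uncurry K))
    (hK : ∀ a ∈ A ∪ B, ∀ b ∈ A ∪ B, ‖K a b‖ ≤ 1) (f : ℂ) :
    grandCanonical K (μ.restrict (A ∪ B)) f =
      grandCanonical K (μ.restrict A) f * grandCanonical K (μ.restrict B) f := by
  have hsummableA := summable_norm_grandCanonicalTerm hA
    (measure_ne_top_of_subset Set.subset_union_left hμ)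
    (fun a ha b hb => hK a (.inl ha) b (.inl hb)) f
  have hsummableB := summable_norm_grandCanonicalTerm hB
    (measure_ne_top_of_subset Set.subset_union_right hμ)
    (fun a ha b hb => hK a (.inr ha) b (.inr hb)) f
  rw [grandCanonical, grandCanonical, grandCanonical,
    tsum_mul_tsum_eq_tsum_sum_range_of_summable_norm hsummableA hsummableB]
  exact tsum_congr fun N => hAB.grandCanonicalTerm_union hdisj hA hB hμ hKm hK f N

theorem grandCanonical_zero_measure (f : ℂ) : grandCanonical K (0 : Measure α) f = 1 := by
  rw [grandCanonical, tsum_eq_single 0]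
  · simp [grandCanonicalTerm, canonicalPartition, boltzmannWeight, measureReal_def]
  · intro N hN
    have hpi : Measure.pi (fun _ : Fin N => (0 : Measure α)) = 0 :=
      Measure.measure_univ_eq_zero.1 (by simp [Measure.pi_univ, hN])
    simp [grandCanonicalTerm, canonicalPartition, hpi]

theorem grandCanonical_biUnion {κ : Type*} (s : Finset κ) {Y : κ → Set α}
    (hni : (s : Set κ).Pairwise fun i j => NonInteracting K (Y i) (Y j))
    (hdisj : (s : Set κ).PairwiseDisjoint Y) (hY : ∀ i ∈ s, MeasurableSet (Y i))
    (hμ : μ (⋃ i ∈ s, Y i) ≠ ⊤) (hKm : Measurable (Function.uncurry K))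
    (hK : ∀ a ∈ ⋃ i ∈ s, Y i, ∀ b ∈ ⋃ i ∈ s, Y i, ‖K a b‖ ≤ 1) (f : ℂ) :
    grandCanonical K (μ.restrict (⋃ i ∈ s, Y i)) f =
      ∏ i ∈ s, grandCanonical K (μ.restrict (Y i)) f := by
  classical
  induction s using Finset.induction_on with
  | empty => simp [grandCanonical_zero_measure]
  | insert i s hi ih =>
    rw [Finset.set_biUnion_insert] at hμ hK ⊢
    rw [Finset.coe_insert] at hni hdisj
    have hnotMem (j : κ) (hj : j ∈ s) : i ≠ j := fun h => hi (h ▸ hj)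
    have hiInt : NonInteracting K (Y i) (⋃ j ∈ s, Y j) := fun a ha b hb => by
      obtain ⟨j, hj, hbj⟩ := Set.mem_iUnion₂.1 hb
      exact hni (.inl rfl) (.inr hj) (hnotMem j hj) a ha b hbj
    have hiDisj : Disjoint (Y i) (⋃ j ∈ s, Y j) := Set.disjoint_iUnion₂_right.2 fun j hj =>
      hdisj (.inl rfl) (.inr hj) (hnotMem j hj)
    have hYs : ∀ j ∈ s, MeasurableSet (Y j) := fun j hj => hY j (Finset.mem_insert_of_mem hj)
    rw [Finset.prod_insert hi,
      hiInt.grandCanonical_union hiDisj (hY i (Finset.mem_insert_self i s))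
        (s.measurableSet_biUnion hYs) hμ hKm hK f,
      ih (hni.mono (Set.subset_insert _ _)) (hdisj.subset (Set.subset_insert _ _)) hYs
        (measure_ne_top_of_subset Set.subset_union_right hμ)
        fun a ha b hb => hK a (.inr ha) b (.inr hb)]

theorem grandCanonical_eq_of_measurePreserving {α' : Type*} [MeasurableSpace α']
    {K' : α' → α' → ℂ} {μ' : Measure α'} [SigmaFinite μ']
    (hK' : Measurable (Function.uncurry K')) {g : α → α'} (hg : MeasurePreserving g μ μ')
    (hKg : ∀ a b, K' (g a) (g b) = K a b) (f : ℂ) :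
    grandCanonical K μ f = grandCanonical K' μ' f := by
  simp only [grandCanonical, grandCanonicalTerm,
    canonicalPartition_eq_of_measurePreserving hK' hg hKg]

end GrandCanonical

section UltrametricBall

open Metric
open IsUltrametricDist (ball_openAddSubgroup closedBall_openAddSubgroup)

variable (E : Type*) [SeminormedAddCommGroup E] [IsUltrametricDist E]

/-- The group of residue classes: the closed unit ball modulo the open unit ball. For a
nonarchimedean field it is the additive group of the residue field. -/
abbrev ResidueClass : Type _ :=
  closedBall_openAddSubgroup E one_pos ⧸
    (ball_openAddSubgroup E one_pos).toAddSubgroup.addSubgroupOf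
      (closedBall_openAddSubgroup E one_pos).toAddSubgroup

variable {E}

theorem ResidueClass.mk_eq_mk_iff_dist_lt_one {a b : closedBall_openAddSubgroup E one_pos} :
    (QuotientAddGroup.mk a : ResidueClass E) = QuotientAddGroup.mk b ↔
      dist (a : E) (b : E) < 1 := by
  rw [QuotientAddGroup.eq, dist_comm, dist_eq_norm, AddSubgroup.mem_addSubgroupOf,
    ← mem_ball_zero_iff, sub_eq_neg_add]
  rfl

/-- The residue class `c` as a subset of `E`: the open unit ball around a representative. -/
def ResidueClass.ball (c : ResidueClass E) : Set E :=
  Metric.ball (c.out : E) 1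

theorem ResidueClass.iUnion_ball : ⋃ c : ResidueClass E, c.ball = closedBall (0 : E) 1 := by
  refine Set.Subset.antisymm (Set.iUnion_subset fun c x hx => ?_) fun x hx => ?_
  · exact (dist_triangle_max x c.out 0).trans (max_le (mem_ball.1 hx).le c.out.2)
  · let a : closedBall_openAddSubgroup E one_pos := ⟨x, hx⟩
    let c : ResidueClass E := QuotientAddGroup.mk a
    have hmk : QuotientAddGroup.mk a = (QuotientAddGroup.mk c.out : ResidueClass E) :=
      (QuotientAddGroup.out_eq' c).symm
    exact Set.mem_iUnion.2 ⟨c, mk_eq_mk_iff_dist_lt_one.1 hmk⟩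

theorem ResidueClass.dist_eq_one_of_ne {c d : ResidueClass E} (hcd : c ≠ d) {x y : E}
    (hx : x ∈ c.ball) (hy : y ∈ d.ball) : dist x y = 1 := by
  have hx' : x ∈ closedBall (0 : E) 1 := iUnion_ball (E := E) ▸ Set.mem_iUnion_of_mem c hx
  have hy' : y ∈ closedBall (0 : E) 1 := iUnion_ball (E := E) ▸ Set.mem_iUnion_of_mem d hy
  refine le_antisymm ?_ (not_lt.1 fun hlt => hcd ?_)
  · exact (dist_triangle_max x 0 y).trans (max_le hx' (mem_closedBall'.1 hy'))
  · rw [← QuotientAddGroup.out_eq' c, ← QuotientAddGroup.out_eq' d, mk_eq_mk_iff_dist_lt_one]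
    exact (dist_triangle_max _ x _).trans_lt <| max_lt (mem_ball'.1 hx) <|
      (dist_triangle_max _ y _).trans_lt <| max_lt hlt (mem_ball.1 hy)

end UltrametricBall

section LogGas

open Metric

variable {E : Type*} [SeminormedAddCommGroup E] {β : ℂ}

/-- The pair interaction `‖x - y‖^β` of the log-Coulomb gas at inverse temperature `β`. -/
noncomputable def logCoulombKernel (β : ℂ) (x y : E) : ℂ :=
  (‖x - y‖ : ℂ) ^ β

theorem measurable_uncurry_logCoulombKernel [SecondCountableTopology E] [MeasurableSpace E]
    [BorelSpace E] (β : ℂ) : Measurable (Function.uncurry (logCoulombKernel (E := E) β)) :=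
  ((Complex.continuous_ofReal.comp (continuous_fst.sub continuous_snd).norm).measurable).pow_const β

theorem norm_logCoulombKernel_le_one (hβ : 0 ≤ β.re) {x y : E} (h : dist x y ≤ 1) :
    ‖logCoulombKernel β x y‖ ≤ 1 := by
  rw [dist_eq_norm] at h
  rw [logCoulombKernel]
  rcases (norm_nonneg (x - y)).eq_or_lt with h₀ | hpos
  · rcases eq_or_ne β 0 with rfl | hβ₀
    · simp
    · simp [← h₀, hβ₀]
  · rw [Complex.norm_cpow_eq_rpow_re_of_pos hpos]
    exact Real.rpow_le_one hpos.le h hβ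

theorem logCoulombKernel_eq_one_of_dist_eq_one {x y : E} (h : dist x y = 1) :
    logCoulombKernel β x y = 1 := by
  rw [logCoulombKernel, ← dist_eq_norm, h, Complex.ofReal_one, Complex.one_cpow]

theorem ResidueClass.nonInteracting_ball [IsUltrametricDist E] {c d : ResidueClass E}
    (hcd : c ≠ d) : NonInteracting (logCoulombKernel β) c.ball d.ball := fun _ hx _ hy =>
  ⟨logCoulombKernel_eq_one_of_dist_eq_one (dist_eq_one_of_ne hcd hx hy),
    logCoulombKernel_eq_one_of_dist_eq_one (dist_eq_one_of_ne hcd.symm hy hx)⟩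

theorem ResidueClass.disjoint_ball [IsUltrametricDist E] {c d : ResidueClass E}
    (hcd : c ≠ d) : Disjoint c.ball d.ball :=
  Set.disjoint_left.2 fun x hx hx' =>
    zero_ne_one ((dist_self x).symm.trans (dist_eq_one_of_ne hcd hx hx'))

theorem norm_logCoulombKernel_le_one_of_mem_closedBall [IsUltrametricDist E]
    (hβ : 0 ≤ β.re) :
    ∀ x ∈ closedBall (0 : E) 1, ∀ y ∈ closedBall (0 : E) 1, ‖logCoulombKernel β x y‖ ≤ 1 :=
  fun x hx y hy => norm_logCoulombKernel_le_one hβ <|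
    (dist_triangle_max x 0 y).trans (max_le hx (mem_closedBall'.1 hy))

variable [SecondCountableTopology E] [MeasurableSpace E] [BorelSpace E] {μ : Measure E}

theorem grandCanonical_logCoulombKernel_ball [μ.IsAddLeftInvariant] (a : E) (r : ℝ)
    [SigmaFinite (μ.restrict (ball 0 r))] (f : ℂ) :
    grandCanonical (logCoulombKernel β) (μ.restrict (ball a r)) f =
      grandCanonical (logCoulombKernel β) (μ.restrict (ball 0 r)) f := by
  have htranslate : MeasurePreserving (-a + ·) (μ.restrict (ball a r)) (μ.restrict (ball 0 r)) := by
    simpa only [preimage_add_ball, sub_neg_eq_add, zero_add] using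
      (measurePreserving_add_left μ (-a)).restrict_preimage
        (measurableSet_ball (x := (0 : E)) (ε := r))
  refine grandCanonical_eq_of_measurePreserving (measurable_uncurry_logCoulombKernel β)
    htranslate (fun x y => ?_) f
  rw [logCoulombKernel, logCoulombKernel, add_sub_add_left_eq_sub]

variable [IsUltrametricDist E]

theorem grandCanonical_closedBall_eq_ball_pow [μ.IsAddLeftInvariant] [Finite (ResidueClass E)]
    (hμ : μ (closedBall 0 1) ≠ ⊤) (hβ : 0 ≤ β.re) (f : ℂ) :
    grandCanonical (logCoulombKernel β) (μ.restrict (closedBall 0 1)) f =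
      grandCanonical (logCoulombKernel β) (μ.restrict (ball 0 1)) f ^
        Nat.card (ResidueClass E) := by
  have := Fintype.ofFinite (ResidueClass E)
  have : IsFiniteMeasure (μ.restrict (ball 0 1)) := isFiniteMeasure_restrict.2 <|
    measure_ne_top_of_subset ball_subset_closedBall hμ
  have hcover : ⋃ c ∈ (Finset.univ : Finset (ResidueClass E)), c.ball = closedBall (0 : E) 1 := by
    simpa only [Finset.mem_univ, Set.iUnion_true] using ResidueClass.iUnion_ball
  rw [← hcover, grandCanonical_biUnion _ (fun _ _ _ _ h => ResidueClass.nonInteracting_ball h)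
    (fun _ _ _ _ h => ResidueClass.disjoint_ball h) (fun _ _ => measurableSet_ball)
    (hcover ▸ hμ) (measurable_uncurry_logCoulombKernel β)
    (hcover ▸ norm_logCoulombKernel_le_one_of_mem_closedBall hβ)]
  simp only [ResidueClass.ball, grandCanonical_logCoulombKernel_ball, Finset.prod_const,
    Finset.card_univ, Nat.card_eq_fintype_card]

theorem statement_7_general [μ.IsAddLeftInvariant] [Finite (ResidueClass E)]
    (hμ : μ (closedBall 0 1) ≠ ⊤) (hβ : 0 ≤ β.re) (f : ℂ) :
    Summable (fun N =>
      ‖grandCanonicalTerm (logCoulombKernel β) (μ.restrict (closedBall 0 1)) f N‖) ∧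
    Summable (fun N =>
      ‖grandCanonicalTerm (logCoulombKernel β) (μ.restrict (ball 0 1)) f N‖) ∧
    grandCanonical (logCoulombKernel β) (μ.restrict (closedBall 0 1)) f =
      grandCanonical (logCoulombKernel β) (μ.restrict (ball 0 1)) f ^
        Nat.card (ResidueClass E) := by
  have hK := norm_logCoulombKernel_le_one_of_mem_closedBall (E := E) hβ
  refine ⟨summable_norm_grandCanonicalTerm measurableSet_closedBall hμ hK f,
    summable_norm_grandCanonicalTerm measurableSet_ball
      (measure_ne_top_of_subset ball_subset_closedBall hμ) (fun x hx y hy => ?_) f,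
    grandCanonical_closedBall_eq_ball_pow hμ hβ f⟩
  exact hK x (ball_subset_closedBall hx) y (ball_subset_closedBall hy)

end LogGas

section Padic

open IsUltrametricDist (ball_openAddSubgroup closedBall_openAddSubgroup)

variable (p : ℕ) [Fact p.Prime]

theorem Zball_eq_closedBall : Zball p = Metric.closedBall 0 1 :=
  Set.ext fun _ => mem_closedBall_zero_iff.symm

theorem Pball_eq_ball : Pball p = Metric.ball 0 1 :=
  Set.ext fun _ => mem_ball_zero_iff.symm

theorem card_residueClass_padic : Nat.card (ResidueClass ℚ_[p]) = p := by
  let f : ℤ_[p] →+ ℚ_[p] := (PadicInt.Coe.ringHom (p := p)).toAddMonoidHom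
  have hrange : f.range = (closedBall_openAddSubgroup ℚ_[p] one_pos).toAddSubgroup := by
    ext x
    refine ⟨?_, fun hx => ⟨⟨x, mem_closedBall_zero_iff.1 hx⟩, rfl⟩⟩
    rintro ⟨y, rfl⟩
    exact mem_closedBall_zero_iff.2 y.2
  have hcomap : (ball_openAddSubgroup ℚ_[p] one_pos).toAddSubgroup.comap f =
      (PadicInt.toZMod (p := p)).toAddMonoidHom.ker := by
    ext x
    have hker : x ∈ RingHom.ker (PadicInt.toZMod (p := p)) ↔ ‖x‖ < 1 := by
      rw [PadicInt.ker_toZMod, IsLocalRing.mem_maximalIdeal, PadicInt.mem_nonunits]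
    exact mem_ball_zero_iff.trans hker.symm
  have hsurj : (PadicInt.toZMod (p := p)).toAddMonoidHom.range = ⊤ :=
    AddMonoidHom.range_eq_top.2 (ZMod.ringHom_surjective _)
  change AddSubgroup.relIndex _ _ = p
  rw [← hrange, ← AddSubgroup.index_comap, hcomap, AddSubgroup.index_ker, hsurj,
    AddSubgroup.card_top, Nat.card_zmod]

instance finite_residueClass_padic : Finite (ResidueClass ℚ_[p]) :=
  Nat.finite_of_card_ne_zero ((card_residueClass_padic p).trans_ne (NeZero.ne p))

theorem ZN_eq_canonicalPartition (μ : Measure ℚ_[p]) [SigmaFinite μ] (X : Set ℚ_[p]) (N : ℕ)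
    (β : ℂ) : ZN p μ X N β = canonicalPartition (logCoulombKernel β) (μ.restrict X) (Fin N) :=
  rfl

end Padic

theorem statement_7 (p : ℕ) [Fact p.Prime]
    (μ : Measure ℚ_[p]) [SigmaFinite μ] [μ.IsAddHaarMeasure] (hμ : μ (Zball p) = 1)
    (β : ℝ) (hβ : 0 < β) (f : ℂ) :
    Summable (fun N => ‖ZN p μ (Zball p) N (β : ℂ) * f ^ N / (N.factorial : ℂ)‖) ∧
    Summable (fun N => ‖ZN p μ (Pball p) N (β : ℂ) * f ^ N / (N.factorial : ℂ)‖) ∧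
    (∑' N, ZN p μ (Zball p) N (β : ℂ) * f ^ N / (N.factorial : ℂ)) =
      (∑' N, ZN p μ (Pball p) N (β : ℂ) * f ^ N / (N.factorial : ℂ)) ^ p := by
  rw [Zball_eq_closedBall] at hμ
  simpa only [Zball_eq_closedBall, Pball_eq_ball, ZN_eq_canonicalPartition,
    grandCanonical, grandCanonicalTerm, card_residueClass_padic] using
    statement_7_general (μ := μ) (β := β) (hμ ▸ ENNReal.one_ne_top)
      ((Complex.ofReal_re β).symm ▸ hβ.le) f

end LogCoulomb
end

section
/- For every prime p and every integer N ≥ 2, the integral 𝒵_N(ℙ¹(ℚ_p), s) converges absolutely if and only if s ∈ Ω_N, and in this case 𝒵_N(ℙ¹(ℚ_p), s) = (p/(p+1))^N · Σ_{(I_0,…,I_p)} ∏_{k=0}^{p} 𝒵_{I_k}(pℤ_p, s), where the sum runs over all (p+1)-tuples (I_0,…,I_p) of pairwise disjoint (possibly empty) subsets of [N] = {1,…,N} whose union is [N]. -/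
open MeasureTheory
open scoped LinearAlgebra.Projectivization

namespace LogCoulomb

/-! The ball `pℤ_p` is the disjoint union of its images under the `p` contractions
`x ↦ p (x + a)`, and its uniform probability measure is the average of the corresponding image
measures. Sort the configurations `(x_i)` in `pℤ_p` by the diameter `p⁻¹, p⁻², …` of
`{x_i : i ∈ I}`. Each further step towards the diagonal multiplies the mass of
`∏ |x_i - x_j|^{s_ij}` by `p ^ (-Re e_I(s))`, so the total mass is a geometric series; its
first term, where the `x_i` do not all lie in the same ball of radius `p⁻²`, is a multiple of a sum
of products of masses for proper subsets of `I`. Induction on `I` turns this into the criterion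
`s ∈ Ω`.

The projective line is a disjoint union of `p + 1` discs, each a copy of `pℤ_p` on which
`δ = |x - y|`, while `δ = 1` between two different discs. The invariance of `ν` and the uniqueness
of translation-invariant measures on `pℤ_p` identify `ν` with the average of the uniform measures of
these discs. The integral over `(ℙ¹)^N` is therefore an average, over the maps `κ : [N] → {0, …, p}`
assigning a disc to each point, of products of integrals over the fibres of `κ`; these tuples of
fibres are exactly the tuples `(I_0, …, I_p)` of the theorem. -/

noncomputable section

open ProbabilityTheory

section ProductMeasures

variable {ι K G X Y : Type*}

theorem pi_smul_sum_map [Fintype ι] [DecidableEq ι] [Fintype K] [MeasurableSpace X]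
    [MeasurableSpace Y] {m : Measure Y} [SigmaFinite m] {ν : Measure X} [SigmaFinite ν]
    {c : ENNReal} {φ : K → Y → X} (hφ : ∀ k, Measurable (φ k)) (hν : ν = c • ∑ k, m.map (φ k)) :
    Measure.pi (fun _ : ι => ν) = c ^ Fintype.card ι •
      ∑ κ : ι → K, (Measure.pi fun _ : ι => m).map fun x i => φ (κ i) (x i) := by
  refine Measure.pi_eq fun t ht => ?_
  have hνt : ∀ i, ν (t i) = c * ∑ k, m (φ k ⁻¹' t i) := fun i => by
    simp [hν, Measure.map_apply (hφ _) (ht i)]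
  have hκ : ∀ κ : ι → K, ((Measure.pi fun _ : ι => m).map fun x i => φ (κ i) (x i))
      (Set.univ.pi t) = ∏ i, m (φ (κ i) ⁻¹' t i) := fun κ => by
    rw [Measure.map_apply (by fun_prop) (.univ_pi ht), ← Measure.pi_pi]
    rfl
  simp_rw [Measure.smul_apply, Measure.finsetSum_apply, hκ, hνt, Finset.prod_mul_distrib,
    Finset.prod_univ_sum, Fintype.piFinset_univ, Finset.prod_const, Finset.card_univ, smul_eq_mul]

theorem pi_diagonal_eq_zero [Fintype ι] [MeasurableSpace Y] [MeasurableEq Y] {m : Measure Y}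
    [IsProbabilityMeasure m] [NullSingletonClass m] {i j : ι} (hij : i ≠ j) :
    Measure.pi (fun _ : ι => m) {x | x i = x j} = 0 := by
  have hmap : (Measure.pi fun _ : ι => m).map (fun x => (x i, x j)) = m.prod m := by
    rw [← Measure.infinitePi_eq_pi, Measure.infinitePi_map_eval_prod hij]
  have hdiag : m.prod m (Set.diagonal Y) = 0 :=
    (Measure.measure_prod_null measurableSet_diagonal).2 <| .of_forall fun y => by
      simp [Set.preimage, Set.diagonal]
  rwa [← hmap, Measure.map_apply (by fun_prop) measurableSet_diagonal] at hdiag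

theorem iIndepFun_restrict_of_pairwise_disjoint [Fintype ι] [MeasurableSpace Y] {m : Measure Y}
    [IsProbabilityMeasure m] {J : K → Finset ι} (hJ : Pairwise fun k l => Disjoint (J k) (J l)) :
    iIndepFun (fun k (x : ι → Y) => (J k).restrict x) (Measure.pi fun _ => m) := by
  have hinj : Function.Injective fun q : (k : K) × J k => (q.2 : ι) := by
    rintro ⟨k, i, hi⟩ ⟨l, j, hj⟩ rfl
    obtain rfl : k = l := by
      by_contra hkl
      exact Finset.disjoint_left.1 (hJ hkl) hi hj
    rfl
  rw [← Measure.infinitePi_eq_pi, iIndepFun_iff_map_fun_eq_infinitePi_map (by fun_prop)]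
  calc (Measure.infinitePi fun _ : ι => m).map (fun x k => (J k).restrict x)
      = ((Measure.infinitePi fun _ : ι => m).map fun x (q : (k : K) × J k) => x q.2).map
          (MeasurableEquiv.piCurry fun _ _ => Y) := by
        rw [Measure.map_map (by fun_prop) (by fun_prop)]
        rfl
    _ = Measure.infinitePi fun k => (Measure.infinitePi fun _ : ι => m).map (J k).restrict := by
        rw [Measure.map_infinitePi_infinitePi_of_inj hinj,
          Measure.infinitePi_map_piCurry (μ := fun _ _ => m)]
        simp_rw [Measure.infinitePi_map_restrict, Measure.infinitePi_eq_pi]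

theorem conv_eq_smul_of_ae_map_add_right [AddCommGroup G] [MeasurableSpace G] [MeasurableAdd₂ G]
    {m m' : Measure G} [SFinite m] [SFinite m'] (h : ∀ᵐ y ∂m', m.map (· + y) = m) :
    m ∗ m' = m' Set.univ • m := by
  ext t ht
  have hind : Measurable (t.indicator (1 : G → ENNReal)) := measurable_one.indicator ht
  have hy : ∀ y, m.map (· + y) = m → ∫⁻ x, t.indicator 1 (y + x) ∂m = m t := fun y hy => by
    conv_rhs => rw [← hy, ← lintegral_indicator_one ht, lintegral_map hind (by fun_prop)]
    simp_rw [add_comm y]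
  rw [Measure.conv_comm, ← lintegral_indicator_one ht, Measure.lintegral_conv hind,
    lintegral_congr_ae (h.mono hy), lintegral_const, Measure.smul_apply, smul_eq_mul, mul_comm]

/- Each measure absorbs the other under convolution, so `m ∗ m'` is a multiple of both. -/
theorem smul_eq_smul_of_ae_map_add_right [AddCommGroup G] [MeasurableSpace G] [MeasurableAdd₂ G]
    {m m' : Measure G} [SFinite m] [SFinite m'] (h : ∀ᵐ y ∂m', m.map (· + y) = m)
    (h' : ∀ᵐ y ∂m, m'.map (· + y) = m') : m' Set.univ • m = m Set.univ • m' := by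
  rw [← conv_eq_smul_of_ae_map_add_right h, Measure.conv_comm,
    conv_eq_smul_of_ae_map_add_right h']

theorem map_add_right_restrict [AddCommGroup G] [MeasurableSpace G] [MeasurableAdd G]
    {m : Measure G} {H : AddSubgroup G} {y : G} (hm : m.map (· + y) = m) (hy : y ∈ H) :
    (m.restrict H).map (· + y) = m.restrict H := by
  have hpre : (· + y) ⁻¹' (H : Set G) = H := Set.ext fun x => H.add_mem_cancel_right hy
  calc (m.restrict H).map (· + y) = (m.restrict ((· + y) ⁻¹' (H : Set G))).map (· + y) := by
        rw [hpre]
    _ = m.restrict H := by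
        rw [← (measurableEmbedding_addRight y).restrict_map, hm]

theorem restrict_iUnion_image [Fintype K] [MeasurableSpace X] [MeasurableSpace Y] (ν : Measure X)
    {φ : K → Y → X} (hφ : ∀ k, MeasurableEmbedding (φ k)) {A : Set Y} (hA : MeasurableSet A)
    (hd : Pairwise fun k l => Disjoint (φ k '' A) (φ l '' A)) :
    ν.restrict (⋃ k, φ k '' A) = ∑ k, ((ν.comap (φ k)).restrict A).map (φ k) := by
  rw [Measure.restrict_iUnion hd fun k => (hφ k).measurableSet_image.2 hA, Measure.sum_fintype]
  refine Finset.sum_congr rfl fun k _ => ?_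
  conv_rhs => rw [← (hφ k).injective.preimage_image A]
  rw [← (hφ k).restrict_map, (hφ k).map_comap,
    Measure.restrict_restrict_of_subset (Set.image_subset_range _ _)]

end ProductMeasures

section Balls

variable {p : ℕ} [Fact p.Prime]

theorem coe_ball_openAddSubgroup :
    ((IsUltrametricDist.ball_openAddSubgroup ℚ_[p] one_pos).toAddSubgroup : Set ℚ_[p]) =
      Pball p :=
  Set.ext fun _ => mem_ball_zero_iff

theorem isOpen_Pball : IsOpen (Pball p) :=
  isOpen_lt continuous_norm continuous_const

theorem sub_mem_Pball {x y : ℚ_[p]} (hx : x ∈ Pball p) (hy : y ∈ Pball p) : x - y ∈ Pball p := by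
  rw [← coe_ball_openAddSubgroup] at hx hy ⊢
  exact sub_mem hx hy

theorem exists_norm_eq_pow_of_mem_Pball {x : ℚ_[p]} (hx : x ∈ Pball p) (h0 : x ≠ 0) :
    ∃ n : ℕ, ‖x‖ = (p : ℝ)⁻¹ ^ (n + 1) := by
  have hp : (1 : ℝ) < p := mod_cast (Fact.out : p.Prime).one_lt
  have hval : -x.valuation < 0 := by
    rwa [← zpow_lt_zpow_iff_right₀ hp, ← Padic.norm_eq_zpow_neg_valuation h0, zpow_zero]
  obtain ⟨n, hn⟩ := Int.eq_succ_of_zero_lt (neg_lt_zero.1 hval)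
  refine ⟨n, ?_⟩
  rw [Padic.norm_eq_zpow_neg_valuation h0, hn, zpow_neg, inv_pow, ← Nat.cast_succ, zpow_natCast]

theorem exists_sub_natCast_mem_Pball {x : ℚ_[p]} (hx : x ∈ Zball p) :
    ∃ a : Fin p, x - (a : ℕ) ∈ Pball p := by
  obtain ⟨n, hn, h⟩ := PadicInt.exists_mem_range (⟨x, hx⟩ : ℤ_[p])
  exact ⟨⟨n, hn⟩, PadicInt.mem_nonunits.1 ((IsLocalRing.mem_maximalIdeal _).1 h)⟩

theorem norm_natCast_sub_natCast_of_ne {a b : Fin p} (hab : a ≠ b) :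
    ‖((a : ℕ) : ℚ_[p]) - (b : ℕ)‖ = 1 := by
  wlog h : b < a generalizing a b
  · rw [norm_sub_rev]
    exact this hab.symm (by lia)
  rw [← Nat.cast_sub h.le, Padic.norm_natCast_eq_one_iff,
    Nat.Prime.coprime_iff_not_dvd Fact.out]
  exact Nat.not_dvd_of_pos_of_lt (by lia) (by lia)

theorem norm_add_natCast_sub_add_natCast_of_ne {a b : Fin p} (hab : a ≠ b) {x y : ℚ_[p]}
    (hx : x ∈ Pball p) (hy : y ∈ Pball p) : ‖(x + (a : ℕ)) - (y + (b : ℕ))‖ = 1 := by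
  have hxy : ‖x - y‖ < 1 := sub_mem_Pball hx hy
  have hab' := norm_natCast_sub_natCast_of_ne hab
  rw [add_sub_add_comm,
    IsUltrametricDist.norm_add_eq_max_of_norm_ne_norm (hxy.trans_eq hab'.symm).ne, hab',
    max_eq_right hxy.le]

theorem norm_add_natCast_le_one {x : ℚ_[p]} (hx : x ∈ Pball p) (a : ℕ) : ‖x + a‖ ≤ 1 :=
  (Padic.nonarchimedean x a).trans
    (max_le (le_of_lt hx) (IsUltrametricDist.norm_natCast_le_one ℚ_[p] a))

theorem iUnion_image_add_natCast_Pball :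
    ⋃ a : Fin p, (· + ((a : ℕ) : ℚ_[p])) '' Pball p = Zball p := by
  refine (Set.iUnion_subset ?_).antisymm fun x hx => ?_
  · rintro a _ ⟨x, hx, rfl⟩
    exact norm_add_natCast_le_one hx a
  · obtain ⟨a, ha⟩ := exists_sub_natCast_mem_Pball hx
    exact Set.mem_iUnion.2 ⟨a, _, ha, sub_add_cancel x _⟩

theorem disjoint_image_add_natCast_Pball {a b : Fin p} (hab : a ≠ b) :
    Disjoint ((· + ((a : ℕ) : ℚ_[p])) '' Pball p) ((· + ((b : ℕ) : ℚ_[p])) '' Pball p) := by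
  rw [Set.disjoint_left]
  rintro _ ⟨x, hx, rfl⟩ ⟨y, hy, hxy⟩
  have := norm_add_natCast_sub_add_natCast_of_ne hab.symm hy hx
  simp [hxy] at this

theorem preimage_mul_Pball : ((p : ℚ_[p]) * ·) ⁻¹' Pball p = Zball p := by
  ext x
  have hp : (0 : ℝ) < p := mod_cast (Fact.out : p.Prime).pos
  have h := Padic.norm_lt_pow_iff_norm_le_pow_sub_one ((p : ℚ_[p]) * x) 0
  rw [zpow_zero, zero_sub, zpow_neg_one, norm_mul, Padic.norm_p,
    mul_le_iff_le_one_right (inv_pos.2 hp)] at h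
  simpa [Pball, Zball] using h

variable (μ : Measure ℚ_[p])

/-- The uniform probability measure on `pℤ_p`. -/
def ballMeasure : Measure ℚ_[p] := μ[|Pball p]

theorem ae_ballMeasure_mem : ∀ᵐ x ∂ballMeasure μ, x ∈ Pball p :=
  ae_cond_mem isOpen_Pball.measurableSet

variable [μ.IsAddHaarMeasure]

theorem restrict_Zball_eq_sum :
    μ.restrict (Zball p) = ∑ a : Fin p, (μ.restrict (Pball p)).map (· + ((a : ℕ) : ℚ_[p])) := by
  have hcomap : ∀ y : ℚ_[p], μ.comap (· + y) = μ := fun y => by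
    conv_lhs => rw [← map_add_right_eq_self μ y]
    exact (measurableEmbedding_addRight y).comap_map _
  rw [← iUnion_image_add_natCast_Pball, restrict_iUnion_image μ
    (fun a => measurableEmbedding_addRight _) isOpen_Pball.measurableSet
    fun a b => disjoint_image_add_natCast_Pball]
  simp_rw [hcomap]

theorem measure_Zball : μ (Zball p) = p * μ (Pball p) := by
  rw [← Measure.restrict_apply_univ, restrict_Zball_eq_sum, Measure.finsetSum_apply]
  simp [Measure.map_apply (measurable_add_const _)]

theorem measure_Pball_ne_zero : μ (Pball p) ≠ 0 :=
  (isOpen_Pball.measure_pos μ ⟨0, by simp [Pball]⟩).ne'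

theorem measure_Pball_ne_top : μ (Pball p) ≠ ⊤ := by
  rw [← coe_ball_openAddSubgroup]
  exact Metric.isBounded_ball.measure_lt_top.ne

instance : IsProbabilityMeasure (ballMeasure μ) :=
  cond_isProbabilityMeasure_of_finite (measure_Pball_ne_zero μ) (measure_Pball_ne_top μ)

instance : NullSingletonClass (ballMeasure μ) :=
  ⟨fun x => cond_absolutelyContinuous (measure_singleton x)⟩

theorem restrict_Pball_eq_smul : μ.restrict (Pball p) = μ (Pball p) • ballMeasure μ := by
  rw [ballMeasure, ProbabilityTheory.cond, smul_smul,
    ENNReal.mul_inv_cancel (measure_Pball_ne_zero μ) (measure_Pball_ne_top μ), one_smul]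

theorem map_add_right_ballMeasure {y : ℚ_[p]} (hy : y ∈ Pball p) :
    (ballMeasure μ).map (· + y) = ballMeasure μ := by
  rw [← coe_ball_openAddSubgroup] at hy
  rw [ballMeasure, ProbabilityTheory.cond, Measure.map_smul, ← coe_ball_openAddSubgroup,
    map_add_right_restrict (map_add_right_eq_self μ y) hy]

/-- The contraction `x ↦ p (x + a)`; for `0 ≤ a < p` these map `pℤ_p` onto the `p` balls of
radius `p⁻²` in `pℤ_p`. -/
def contraction (a : Fin p) (x : ℚ_[p]) : ℚ_[p] := p * (x + (a : ℕ))

theorem measurable_contraction (a : Fin p) : Measurable (contraction a) :=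
  Continuous.measurable (by unfold contraction; fun_prop)

theorem measurable_pi_contraction {ι : Type*} (κ : ι → Fin p) :
    Measurable fun (x : ι → ℚ_[p]) i => contraction (κ i) (x i) :=
  measurable_pi_lambda _ fun i => (measurable_contraction (κ i)).comp (measurable_pi_apply i)

theorem map_mul_left_eq_smul : μ.map ((p : ℚ_[p]) * ·) = (p : ENNReal) • μ := by
  have hp : (p : ℚ_[p]) ≠ 0 := mod_cast (Fact.out : p.Prime).ne_zero
  have : (μ.map ((p : ℚ_[p]) * ·)).IsAddHaarMeasure :=
    (DistribMulAction.toAddEquiv₀ ℚ_[p] (p : ℚ_[p]) hp).isAddHaarMeasure_map μ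
      (continuous_const_smul (p : ℚ_[p])) (continuous_const_smul (p : ℚ_[p])⁻¹)
  have hscale := Measure.isAddLeftInvariant_eq_smul (μ.map ((p : ℚ_[p]) * ·)) μ
  have hc := congrArg (· (Pball p)) hscale
  rw [Measure.map_apply (measurable_const_mul _) isOpen_Pball.measurableSet, preimage_mul_Pball,
    measure_Zball, Measure.smul_apply, ENNReal.smul_def, smul_eq_mul,
    ENNReal.mul_left_inj (measure_Pball_ne_zero μ) (measure_Pball_ne_top μ)] at hc
  rw [hscale, hc]
  rfl

theorem map_mul_left_restrict_Zball :
    (μ.restrict (Zball p)).map ((p : ℚ_[p]) * ·) = (p : ENNReal) • μ.restrict (Pball p) := by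
  rw [← preimage_mul_Pball, ← Measure.restrict_map (measurable_const_mul _)
    isOpen_Pball.measurableSet, map_mul_left_eq_smul, Measure.restrict_smul]

theorem ballMeasure_eq_sum_map_contraction :
    ballMeasure μ = (p : ENNReal)⁻¹ • ∑ a : Fin p, (ballMeasure μ).map (contraction a) := by
  have hp : (p : ENNReal) ≠ 0 := mod_cast (Fact.out : p.Prime).ne_zero
  have hmap : ∀ a : Fin p, ((μ.restrict (Pball p)).map (· + ((a : ℕ) : ℚ_[p]))).map
      ((p : ℚ_[p]) * ·) = (μ.restrict (Pball p)).map (contraction a) := fun a => by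
    rw [Measure.map_map (measurable_const_mul _) (measurable_add_const _)]
    rfl
  have hsum : ∑ a : Fin p, (μ.restrict (Pball p)).map (contraction a) =
      (p : ENNReal) • μ.restrict (Pball p) := by
    rw [← map_mul_left_restrict_Zball, restrict_Zball_eq_sum,
      ← Measure.mapₗ_apply_of_measurable (measurable_const_mul _), map_sum]
    simp_rw [Measure.mapₗ_apply_of_measurable (measurable_const_mul (p : ℚ_[p])), hmap]
  simp_rw [ballMeasure, ProbabilityTheory.cond, Measure.map_smul]
  rw [← Finset.smul_sum, hsum, smul_comm _ (p : ENNReal), smul_smul,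
    ENNReal.inv_mul_cancel hp (ENNReal.natCast_ne_top p), one_smul]

theorem norm_contraction_sub_contraction (a : Fin p) (x y : ℚ_[p]) :
    ‖contraction a x - contraction a y‖ = (p : ℝ)⁻¹ * ‖x - y‖ := by
  rw [contraction, contraction, ← mul_sub, add_sub_add_right_eq_sub, norm_mul, Padic.norm_p]

theorem norm_contraction_sub_contraction_of_ne {a b : Fin p} (hab : a ≠ b) {x y : ℚ_[p]}
    (hx : x ∈ Pball p) (hy : y ∈ Pball p) :
    ‖contraction a x - contraction b y‖ = (p : ℝ)⁻¹ := by
  rw [contraction, contraction, ← mul_sub, norm_mul, Padic.norm_p,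
    norm_add_natCast_sub_add_natCast_of_ne hab hx hy, mul_one]

end Balls

section Coulomb

variable {ι : Type*} {p : ℕ} [Fact p.Prime] (s : ι → ι → ℂ) (S : Finset (ι × ι))

/-- The product `∏ |x_i - x_j|^{s_ij}` over the pairs `(i, j)` in `S`: the integrand of the
partition functions over subsets of `ℚ_p`. -/
def coulomb (x : ι → ℚ_[p]) : ℂ :=
  ∏ q ∈ S, (‖x q.1 - x q.2‖ : ℂ) ^ s q.1 q.2

theorem measurable_coulomb : Measurable (coulomb (p := p) s S) :=
  Finset.measurable_fun_prod S fun q _ => by fun_prop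

theorem coulomb_contraction (κ : ι → Fin p) {x : ι → ℚ_[p]}
    (hx : ∀ i, x i ∈ Pball p) :
    coulomb s S (fun i => contraction (κ i) (x i)) =
      (p : ℂ) ^ (-∑ q ∈ S, s q.1 q.2) * coulomb s (S.filter fun q => κ q.1 = κ q.2) x := by
  have hp : (p : ℂ) ≠ 0 := mod_cast (Fact.out : p.Prime).ne_zero
  have hscale : (p : ℂ) ^ (-∑ q ∈ S, s q.1 q.2) = ∏ q ∈ S, (((p : ℝ)⁻¹ : ℝ) : ℂ) ^ s q.1 q.2 := by
    rw [← Finset.sum_neg_distrib, Complex.cpow_def_of_ne_zero hp, Finset.mul_sum, Complex.exp_sum]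
    refine Finset.prod_congr rfl fun q _ => ?_
    rw [← Complex.cpow_def_of_ne_zero hp, Complex.cpow_neg, Complex.ofReal_inv,
      Complex.ofReal_natCast,
      Complex.inv_cpow _ _ (by simp [Complex.natCast_arg, Real.pi_ne_zero.symm])]
  rw [hscale, coulomb, coulomb, Finset.prod_filter, ← Finset.prod_mul_distrib]
  refine Finset.prod_congr rfl fun q _ => ?_
  split_ifs with hq
  · rw [hq, norm_contraction_sub_contraction, Complex.ofReal_mul,
      Complex.mul_cpow_ofReal_nonneg (by positivity) (norm_nonneg _)]
  · rw [norm_contraction_sub_contraction_of_ne hq (hx _) (hx _), mul_one]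

theorem enorm_natCast_cpow_neg {n : ℕ} (hn : 0 < n) (z : ℂ) :
    ‖(n : ℂ) ^ (-z)‖ₑ = (n : ENNReal) ^ (-z.re) := by
  rw [← ofReal_norm, Complex.norm_natCast_cpow_of_pos hn, Complex.neg_re,
    ← ENNReal.ofReal_rpow_of_pos (by positivity), ENNReal.ofReal_natCast]

variable [Fintype ι] (μ : Measure ℚ_[p])

/-- The integral of `|∏ |x_i - x_j|^{s_ij}|` over `pℤ_p`-valued configurations, for the uniform
probability measure; it is finite exactly when the partition function converges absolutely. -/
def coulombMass : ENNReal :=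
  ∫⁻ x, ‖coulomb s S x‖ₑ ∂Measure.pi fun _ => ballMeasure μ

theorem integrable_coulomb_iff :
    Integrable (coulomb s S) (Measure.pi fun _ => ballMeasure μ) ↔ coulombMass s S μ ≠ ⊤ := by
  rw [Integrable, and_iff_right (measurable_coulomb s S).aestronglyMeasurable, HasFiniteIntegral,
    lt_top_iff_ne_top, coulombMass]

variable [μ.IsAddHaarMeasure]

theorem ae_pi_ballMeasure_mem :
    ∀ᵐ x ∂Measure.pi fun _ : ι => ballMeasure μ, ∀ i, x i ∈ Pball p :=
  ae_all_iff.2 fun i =>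
    (Measure.quasiMeasurePreserving_eval (μ := fun _ : ι => ballMeasure μ) i).ae
      (ae_ballMeasure_mem μ)

theorem lintegral_pi_ballMeasure_eq_sum [DecidableEq ι] {F : (ι → ℚ_[p]) → ENNReal}
    (hF : Measurable F) :
    ∫⁻ x, F x ∂Measure.pi (fun _ => ballMeasure μ) = (p : ENNReal)⁻¹ ^ Fintype.card ι *
      ∑ κ : ι → Fin p, ∫⁻ x, F (fun i => contraction (κ i) (x i))
        ∂Measure.pi fun _ => ballMeasure μ := by
  conv_lhs => rw [pi_smul_sum_map measurable_contraction (ballMeasure_eq_sum_map_contraction μ),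
    lintegral_smul_measure, lintegral_finsetSum_measure, smul_eq_mul]
  simp_rw [lintegral_map hF (measurable_pi_contraction _)]

theorem ae_coulomb_ne_zero (hS : ∀ q ∈ S, q.1 ≠ q.2) :
    ∀ᵐ x ∂Measure.pi fun _ => ballMeasure μ, coulomb s S x ≠ 0 := by
  have hoff : ∀ᵐ x ∂Measure.pi fun _ : ι => ballMeasure μ, ∀ q ∈ S, x q.1 ≠ x q.2 :=
    (Finset.eventually_all S).2 fun q hq => by
      simpa [ae_iff] using pi_diagonal_eq_zero (m := ballMeasure μ) (hS q hq)
  filter_upwards [hoff] with x hx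
  refine Finset.prod_ne_zero_iff.2 fun q hq => ?_
  rw [Complex.cpow_ne_zero_iff]
  exact .inl (by simpa [sub_eq_zero] using hx q hq)

theorem coulombMass_ne_zero (hS : ∀ q ∈ S, q.1 ≠ q.2) : coulombMass s S μ ≠ 0 := by
  rw [coulombMass, Ne, lintegral_eq_zero_iff (measurable_coulomb s S).enorm]
  intro h0
  obtain ⟨x, hx, hx0⟩ := ((ae_coulomb_ne_zero s S μ hS).and h0).exists
  exact hx (by simpa using hx0)

end Coulomb

section Spread

variable {ι : Type*} {p : ℕ} [Fact p.Prime] (I : Finset ι)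

/-- The diameter of the set of points `x_i`, `i ∈ I`. -/
def spread (x : ι → ℚ_[p]) : NNReal :=
  (I ×ˢ I).sup fun q => ‖x q.1 - x q.2‖₊

theorem measurable_spread [Countable ι] : Measurable (spread (p := p) I) :=
  (Continuous.finset_sup_apply fun q _ => by fun_prop).measurable

variable {I}

theorem nnnorm_sub_le_spread {i j : ι} (hi : i ∈ I) (hj : j ∈ I) (x : ι → ℚ_[p]) :
    ‖x i - x j‖₊ ≤ spread I x :=
  Finset.le_sup (f := fun q : ι × ι => ‖x q.1 - x q.2‖₊) (Finset.mk_mem_product hi hj)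

theorem spread_lt_one {x : ι → ℚ_[p]} (hx : ∀ i, x i ∈ Pball p) : spread I x < 1 :=
  (Finset.sup_lt_iff one_pos).2 fun _ _ => sub_mem_Pball (hx _) (hx _)

theorem spread_contraction_of_const {κ : ι → Fin p} (hκ : ∀ i ∈ I, ∀ j ∈ I, κ i = κ j)
    (x : ι → ℚ_[p]) :
    spread I (fun i => contraction (κ i) (x i)) = (p : NNReal)⁻¹ * spread I x := by
  rw [spread, spread, NNReal.mul_finset_sup]
  refine Finset.sup_congr rfl fun q hq => NNReal.eq ?_
  obtain ⟨h1, h2⟩ := Finset.mem_product.1 hq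
  simpa [hκ _ h1 _ h2] using norm_contraction_sub_contraction (κ q.2) (x q.1) (x q.2)

theorem spread_contraction_of_ne {κ : ι → Fin p} {i j : ι} (hi : i ∈ I) (hj : j ∈ I)
    (hij : κ i ≠ κ j) {x : ι → ℚ_[p]} (hx : ∀ i, x i ∈ Pball p) :
    spread I (fun i => contraction (κ i) (x i)) = (p : NNReal)⁻¹ := by
  refine le_antisymm (Finset.sup_le fun q _ => ?_) ?_
  · rw [← NNReal.coe_le_coe]
    push_cast
    by_cases hq : κ q.1 = κ q.2
    · rw [hq, norm_contraction_sub_contraction]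
      exact mul_le_of_le_one_right (by positivity)
        (Set.mem_ofPred_eq ▸ sub_mem_Pball (hx _) (hx _)).le
    · exact (norm_contraction_sub_contraction_of_ne hq (hx _) (hx _)).le
  · refine le_of_eq_of_le (NNReal.eq ?_)
      (nnnorm_sub_le_spread hi hj fun i => contraction (κ i) (x i))
    simpa using (norm_contraction_sub_contraction_of_ne hij (hx i) (hx j)).symm

theorem exists_spread_eq_pow {x : ι → ℚ_[p]} (hx : ∀ i, x i ∈ Pball p) (h0 : spread I x ≠ 0) :
    ∃ n : ℕ, spread I x = (p : NNReal)⁻¹ ^ (n + 1) := by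
  obtain ⟨q, -, hq⟩ := Finset.exists_mem_eq_sup (I ×ˢ I)
    (Finset.nonempty_iff_ne_empty.2 fun h => h0 (by simp [spread, h]))
    fun q : ι × ι => ‖x q.1 - x q.2‖₊
  rw [← spread] at hq
  have hne : x q.1 - x q.2 ≠ 0 := by simpa [hq] using h0
  obtain ⟨n, hn⟩ := exists_norm_eq_pow_of_mem_Pball (sub_mem_Pball (hx q.1) (hx q.2)) hne
  exact ⟨n, hq.trans (NNReal.eq (by simpa using hn))⟩

variable [Fintype ι] (μ : Measure ℚ_[p]) [μ.IsAddHaarMeasure]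

theorem ae_spread_ne_zero (hI : 1 < I.card) :
    ∀ᵐ x ∂Measure.pi fun _ => ballMeasure μ, spread I x ≠ 0 := by
  obtain ⟨i, hi, j, hj, hij⟩ := Finset.one_lt_card.1 hI
  have hne : ∀ᵐ x ∂Measure.pi fun _ : ι => ballMeasure μ, x i ≠ x j := by
    simpa [ae_iff] using pi_diagonal_eq_zero (m := ballMeasure μ) hij
  filter_upwards [hne] with x hx h0
  refine hx (sub_eq_zero.1 (nnnorm_eq_zero.1 (le_antisymm ?_ zero_le)))
  exact h0 ▸ nnnorm_sub_le_spread hi hj x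

end Spread

section ConstOn

theorem pairwise_disjoint_filter_eq {ι K : Type*} [DecidableEq K] (I : Finset ι) (κ : ι → K) :
    Pairwise fun k l => Disjoint (I.filter fun i => κ i = k) (I.filter fun i => κ i = l) :=
  fun _ _ hkl => Finset.disjoint_filter.2 fun _ _ hk hl => hkl (hk.symm.trans hl)

variable {ι K : Type*} [Fintype ι] [DecidableEq ι] [Fintype K] [DecidableEq K]

/-- The functions `ι → K` that are constant on `I`. -/
def constOn (K : Type*) [Fintype K] [DecidableEq K] (I : Finset ι) : Finset (ι → K) :=
  Finset.univ.filter fun κ => ∀ i ∈ I, ∀ j ∈ I, κ i = κ j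

theorem mem_constOn {I : Finset ι} {κ : ι → K} :
    κ ∈ constOn K I ↔ ∀ i ∈ I, ∀ j ∈ I, κ i = κ j := by
  simp [constOn]

theorem card_constOn {I : Finset ι} (hI : I.Nonempty) :
    (constOn K I).card = Fintype.card K ^ (Iᶜ.card + 1) := by
  obtain ⟨i₀, hi₀⟩ := hI
  have hfib : ∀ k, (constOn K I).filter (fun κ => κ i₀ = k) =
      Fintype.piFinset fun i => if i ∈ I then {k} else Finset.univ := fun k => by
    ext κ
    have hmem : ∀ i, (κ i ∈ if i ∈ I then {k} else Finset.univ) ↔ (i ∈ I → κ i = k) := fun i => by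
      split_ifs with hi <;> simp [hi]
    simp only [Finset.mem_filter, mem_constOn, Fintype.mem_piFinset, hmem]
    exact ⟨fun h i hi => (h.1 i hi i₀ hi₀).trans h.2,
      fun h => ⟨fun i hi j hj => (h i hi).trans (h j hj).symm, h i₀ hi₀⟩⟩
  rw [Finset.card_eq_sum_card_fiberwise (f := fun κ => κ i₀) (t := Finset.univ) fun _ _ => by simp]
  simp [hfib, Fintype.card_piFinset, apply_ite Finset.card, Finset.prod_ite, pow_succ',
    Finset.filter_not, Finset.compl_eq_univ_sdiff]

end ConstOn

section Layers

variable {ι : Type*} {p : ℕ} [Fact p.Prime]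

/-- The configurations for which the diameter of `x_i`, `i ∈ I`, is `p ^ (-(n + 1))`. -/
def layer (p : ℕ) [Fact p.Prime] (I : Finset ι) (n : ℕ) : Set (ι → ℚ_[p]) :=
  {x | spread I x = (p : NNReal)⁻¹ ^ (n + 1)}

variable {I : Finset ι}

theorem measurableSet_layer [Countable ι] (n : ℕ) : MeasurableSet (layer p I n) :=
  measurable_spread I (measurableSet_singleton _)

theorem pairwise_disjoint_layer : Pairwise (Function.onFun Disjoint (layer p I)) := by
  intro m n hmn
  refine Set.disjoint_left.2 fun x hm hn => hmn ?_
  have hp : (1 : NNReal) < p := mod_cast (Fact.out : p.Prime).one_lt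
  exact Nat.succ_injective (pow_right_injective₀ (by positivity) (inv_lt_one_of_one_lt₀ hp).ne
    (hm.symm.trans hn))

theorem contraction_mem_layer_zero_iff [Fintype ι] [DecidableEq ι] {κ : ι → Fin p}
    {x : ι → ℚ_[p]} (hx : ∀ i, x i ∈ Pball p) :
    (fun i => contraction (κ i) (x i)) ∈ layer p I 0 ↔ κ ∉ constOn (Fin p) I := by
  have hp : (0 : NNReal) < (p : NNReal)⁻¹ := by
    simpa using (Fact.out : p.Prime).pos
  constructor
  · intro h hκ
    rw [layer, Set.mem_ofPred_eq, spread_contraction_of_const (mem_constOn.1 hκ), zero_add, pow_one,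
      mul_eq_left₀ hp.ne'] at h
    exact (spread_lt_one hx).ne h
  · intro hκ
    rw [mem_constOn] at hκ
    push Not at hκ
    obtain ⟨i, hi, j, hj, hij⟩ := hκ
    rw [layer, Set.mem_ofPred_eq, spread_contraction_of_ne hi hj hij hx, zero_add, pow_one]

theorem contraction_mem_layer_succ_iff [Fintype ι] [DecidableEq ι] {κ : ι → Fin p} {n : ℕ}
    {x : ι → ℚ_[p]} (hx : ∀ i, x i ∈ Pball p) :
    (fun i => contraction (κ i) (x i)) ∈ layer p I (n + 1) ↔
      κ ∈ constOn (Fin p) I ∧ x ∈ layer p I n := by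
  have hp : (0 : NNReal) < (p : NNReal)⁻¹ := by
    simpa using (Fact.out : p.Prime).pos
  by_cases hκ : κ ∈ constOn (Fin p) I
  · rw [layer, Set.mem_ofPred_eq, spread_contraction_of_const (mem_constOn.1 hκ), pow_succ',
      mul_right_inj' hp.ne']
    exact (and_iff_right hκ).symm
  · refine iff_of_false ?_ fun h => hκ h.1
    exact Set.disjoint_left.1 (pairwise_disjoint_layer n.succ_ne_zero.symm)
      ((contraction_mem_layer_zero_iff hx).2 hκ)

variable [Fintype ι] (μ : Measure ℚ_[p]) [μ.IsAddHaarMeasure]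

theorem ae_mem_iUnion_layer (hI : 1 < I.card) :
    ∀ᵐ x ∂Measure.pi fun _ => ballMeasure μ, x ∈ ⋃ n, layer p I n := by
  filter_upwards [ae_pi_ballMeasure_mem μ, ae_spread_ne_zero μ hI] with x hx h0
  exact Set.mem_iUnion.2 (exists_spread_eq_pow hx h0)

theorem setLIntegral_coulomb_eq_sum [DecidableEq ι] (s : ι → ι → ℂ) (S : Finset (ι × ι))
    {A : Set (ι → ℚ_[p])} (hA : MeasurableSet A) :
    ∫⁻ x in A, ‖coulomb s S x‖ₑ ∂Measure.pi (fun _ => ballMeasure μ) =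
      (p : ENNReal)⁻¹ ^ Fintype.card ι * (p : ENNReal) ^ (-(∑ q ∈ S, s q.1 q.2).re) *
        ∑ κ : ι → Fin p, ∫⁻ x in {x | (fun i => contraction (κ i) (x i)) ∈ A},
          ‖coulomb s (S.filter fun q => κ q.1 = κ q.2) x‖ₑ ∂Measure.pi fun _ => ballMeasure μ := by
  have hp := (Fact.out : p.Prime).pos
  have hpre : ∀ κ : ι → Fin p,
      MeasurableSet {x : ι → ℚ_[p] | (fun i => contraction (κ i) (x i)) ∈ A} :=
    fun κ => measurable_pi_contraction κ hA
  rw [← lintegral_indicator hA, lintegral_pi_ballMeasure_eq_sum μ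
    ((measurable_coulomb s S).enorm.indicator hA), mul_assoc]
  congr 1
  rw [Finset.mul_sum]
  refine Finset.sum_congr rfl fun κ _ => ?_
  rw [← lintegral_indicator (hpre κ), ← lintegral_const_mul _
    ((measurable_coulomb s _).enorm.indicator (hpre κ))]
  refine lintegral_congr_ae ?_
  filter_upwards [ae_pi_ballMeasure_mem μ] with x hx
  classical
  simp only [Set.indicator_apply, Set.mem_ofPred_eq, coulomb_contraction s S κ hx, enorm_mul,
    enorm_natCast_cpow_neg hp, mul_ite, mul_zero]

end Layers

section Convergence

variable {N : ℕ}

/-- The pairs `i < j` of elements of `I`. -/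
def pairsIn (I : Finset (Fin N)) : Finset (Fin N × Fin N) :=
  (pairs N).filter fun q => q.1 ∈ I ∧ q.2 ∈ I

theorem mem_pairsIn {I : Finset (Fin N)} {q : Fin N × Fin N} :
    q ∈ pairsIn I ↔ q.1 < q.2 ∧ q.1 ∈ I ∧ q.2 ∈ I := by
  simp [pairsIn, pairs]

theorem pairsIn_univ : pairsIn (Finset.univ : Finset (Fin N)) = pairs N := by
  simp [pairsIn]

theorem fst_ne_snd_of_mem_pairsIn {I : Finset (Fin N)} {q : Fin N × Fin N} (hq : q ∈ pairsIn I) :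
    q.1 ≠ q.2 :=
  (mem_pairsIn.1 hq).1.ne

theorem pairsIn_eq_empty {I : Finset (Fin N)} (hI : I.card ≤ 1) : pairsIn I = ∅ :=
  Finset.eq_empty_of_forall_notMem fun _ hq =>
    fst_ne_snd_of_mem_pairsIn hq
      (Finset.card_le_one.1 hI _ (mem_pairsIn.1 hq).2.1 _ (mem_pairsIn.1 hq).2.2)

theorem coulombMass_pairsIn_of_card_le_one {p : ℕ} [Fact p.Prime] (s : Fin N → Fin N → ℂ)
    (μ : Measure ℚ_[p]) [μ.IsAddHaarMeasure] {I : Finset (Fin N)} (hI : I.card ≤ 1) :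
    coulombMass s (pairsIn I) μ = 1 := by
  simp [coulombMass, coulomb, pairsIn_eq_empty hI]

section Blocks

variable {K : Type*}

theorem filter_filter_pairsIn [DecidableEq K] (I : Finset (Fin N)) (κ : Fin N → K) (k : K) :
    ((pairsIn I).filter fun q => κ q.1 = κ q.2).filter (fun q => κ q.1 = k) =
      pairsIn (I.filter fun i => κ i = k) := by
  ext q
  simp only [Finset.mem_filter, mem_pairsIn]
  grind

theorem filter_pairsIn_of_mem_constOn [Fintype K] [DecidableEq K] {I : Finset (Fin N)}
    {κ : Fin N → K} (hκ : κ ∈ constOn K I) :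
    ((pairsIn I).filter fun q => κ q.1 = κ q.2) = pairsIn I :=
  Finset.filter_true_of_mem fun _ hq =>
    mem_constOn.1 hκ _ (mem_pairsIn.1 hq).2.1 _ (mem_pairsIn.1 hq).2.2

variable {p : ℕ} [Fact p.Prime] (s : Fin N → Fin N → ℂ)

theorem coulomb_filter_pairsIn [Fintype K] [DecidableEq K] (I : Finset (Fin N)) (κ : Fin N → K)
    (x : Fin N → ℚ_[p]) :
    coulomb s ((pairsIn I).filter fun q => κ q.1 = κ q.2) x =
      ∏ k, coulomb s (pairsIn (I.filter fun i => κ i = k)) x := by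
  simp_rw [coulomb, ← filter_filter_pairsIn]
  exact (Finset.prod_fiberwise _ (fun q : Fin N × Fin N => κ q.1) _).symm

theorem coulomb_pairsIn_eq_restrict (I : Finset (Fin N)) (x : Fin N → ℚ_[p]) :
    coulomb s (pairsIn I) x = coulomb (fun i j : I => s i j)
      (Finset.univ.filter fun q : I × I => (q.1 : Fin N) < q.2) (I.restrict x) := by
  refine Finset.prod_bij'
    (fun q hq => (⟨q.1, (mem_pairsIn.1 hq).2.1⟩, ⟨q.2, (mem_pairsIn.1 hq).2.2⟩))
    (fun q _ => (q.1, q.2)) ?_ ?_ ?_ ?_ ?_ <;> simp +contextual [mem_pairsIn]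

variable (μ : Measure ℚ_[p]) [μ.IsAddHaarMeasure]

theorem iIndepFun_coulomb {J : K → Finset (Fin N)}
    (hJ : Pairwise fun k l => Disjoint (J k) (J l)) :
    iIndepFun (fun k => coulomb s (pairsIn (J k))) (Measure.pi fun _ => ballMeasure μ) := by
  have h := (iIndepFun_restrict_of_pairwise_disjoint (m := ballMeasure μ) hJ).comp _
    fun k => measurable_coulomb (fun i j : J k => s i j)
      (Finset.univ.filter fun q : J k × J k => (q.1 : Fin N) < q.2)
  convert h using 2 with k
  funext x
  exact coulomb_pairsIn_eq_restrict s (J k) x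

theorem coulombMass_filter_pairsIn [Fintype K] [DecidableEq K] (I : Finset (Fin N))
    (κ : Fin N → K) :
    coulombMass s ((pairsIn I).filter fun q => κ q.1 = κ q.2) μ =
      ∏ k, coulombMass s (pairsIn (I.filter fun i => κ i = k)) μ := by
  have hind := (iIndepFun_coulomb s μ (pairwise_disjoint_filter_eq I κ)).comp
    (fun _ z => ‖z‖ₑ) fun _ => measurable_enorm
  simp_rw [coulombMass, coulomb_filter_pairsIn, enorm_eq_nnnorm, nnnorm_prod,
    ENNReal.ofNNReal_finsetProd]
  exact lintegral_prod_eq_prod_lintegral_of_indepFun _ _ hind fun k =>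
    (measurable_coulomb s _).enorm

theorem coulombMass_filter_pairsIn_ne_top_iff [Finite K] [DecidableEq K] (I : Finset (Fin N))
    (κ : Fin N → K) :
    coulombMass s ((pairsIn I).filter fun q => κ q.1 = κ q.2) μ ≠ ⊤ ↔
      ∀ k, coulombMass s (pairsIn (I.filter fun i => κ i = k)) μ ≠ ⊤ := by
  have := Fintype.ofFinite K
  rw [coulombMass_filter_pairsIn]
  refine ⟨fun h k hk => h (WithTop.prod_eq_top (Finset.mem_univ k) hk fun l _ =>
    coulombMass_ne_zero s _ μ fun q => fst_ne_snd_of_mem_pairsIn), fun h =>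
    ENNReal.prod_ne_top fun k _ => h k⟩

end Blocks

variable {p : ℕ} [Fact p.Prime] (s : Fin N → Fin N → ℂ) (μ : Measure ℚ_[p])

/-- The part of `coulombMass s (pairsIn I) μ` carried by `layer p I n`. -/
def layerMass (I : Finset (Fin N)) (n : ℕ) : ENNReal :=
  ∫⁻ x in layer p I n, ‖coulomb s (pairsIn I) x‖ₑ ∂Measure.pi fun _ => ballMeasure μ

variable [μ.IsAddHaarMeasure] {I : Finset (Fin N)}

theorem coulombMass_eq_tsum_layerMass (hI : 1 < I.card) :
    coulombMass s (pairsIn I) μ = ∑' n, layerMass s μ I n := by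
  simp_rw [layerMass]
  rw [coulombMass, ← lintegral_iUnion measurableSet_layer pairwise_disjoint_layer,
    Measure.restrict_eq_self_of_ae_mem (ae_mem_iUnion_layer μ hI)]

theorem inv_pow_mul_rpow_mul_card_constOn (hI : I.Nonempty) :
    (p : ENNReal)⁻¹ ^ N * (p : ENNReal) ^ (-(∑ q ∈ pairsIn I, s q.1 q.2).re) *
      ((constOn (Fin p) I).card : ENNReal) = (p : ENNReal) ^ (-(eexp I s).re) := by
  have hp0 : (p : ENNReal) ≠ 0 := mod_cast (Fact.out : p.Prime).ne_zero
  have hpt := ENNReal.natCast_ne_top p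
  have hcard : (I.card : ℝ) + Iᶜ.card = N := by
    exact_mod_cast (Finset.card_add_card_compl I).trans (Fintype.card_fin N)
  rw [card_constOn hI, Fintype.card_fin, Nat.cast_pow, ← ENNReal.inv_pow, ← ENNReal.rpow_natCast,
    ← ENNReal.rpow_natCast, ← ENNReal.rpow_neg, ← ENNReal.rpow_add _ _ hp0 hpt,
    ← ENNReal.rpow_add _ _ hp0 hpt]
  congr 1
  simp only [eexp, pairsIn, Complex.add_re, Complex.sub_re, Complex.natCast_re, Complex.one_re]
  push_cast
  linarith

theorem layerMass_zero (I : Finset (Fin N)) : layerMass s μ I 0 =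
    (p : ENNReal)⁻¹ ^ N * (p : ENNReal) ^ (-(∑ q ∈ pairsIn I, s q.1 q.2).re) *
      ∑ κ ∈ (constOn (Fin p) I)ᶜ, coulombMass s ((pairsIn I).filter fun q => κ q.1 = κ q.2) μ := by
  rw [layerMass, setLIntegral_coulomb_eq_sum μ s _ (measurableSet_layer 0), Fintype.card_fin,
    ← Finset.sum_subset (Finset.subset_univ (constOn (Fin p) I)ᶜ)]
  · refine congrArg _ (Finset.sum_congr rfl fun κ hκ => ?_)
    rw [coulombMass, Measure.restrict_eq_self_of_ae_mem]
    filter_upwards [ae_pi_ballMeasure_mem μ] with x hx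
    exact (contraction_mem_layer_zero_iff hx).2 (Finset.mem_compl.1 hκ)
  · intro κ _ hκ
    refine setLIntegral_measure_zero _ _ (measure_eq_zero_iff_ae_notMem.2 ?_)
    filter_upwards [ae_pi_ballMeasure_mem μ] with x hx hx0
    exact hκ (Finset.mem_compl.2 ((contraction_mem_layer_zero_iff hx).1 hx0))

theorem layerMass_succ (hI : I.Nonempty) (n : ℕ) :
    layerMass s μ I (n + 1) = (p : ENNReal) ^ (-(eexp I s).re) * layerMass s μ I n := by
  rw [layerMass, setLIntegral_coulomb_eq_sum μ s _ (measurableSet_layer (n + 1)), Fintype.card_fin,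
    ← Finset.sum_subset (Finset.subset_univ (constOn (Fin p) I)),
    ← inv_pow_mul_rpow_mul_card_constOn s hI, mul_assoc _ ((constOn (Fin p) I).card : ENNReal),
    ← nsmul_eq_mul]
  · refine congrArg _ (Finset.sum_eq_card_nsmul fun κ hκ => ?_)
    rw [filter_pairsIn_of_mem_constOn hκ, layerMass]
    refine setLIntegral_congr ?_
    filter_upwards [ae_pi_ballMeasure_mem μ] with x hx
    exact propext ((contraction_mem_layer_succ_iff hx).trans (and_iff_right hκ))
  · intro κ _ hκ
    refine setLIntegral_measure_zero _ _ (measure_eq_zero_iff_ae_notMem.2 ?_)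
    filter_upwards [ae_pi_ballMeasure_mem μ] with x hx hx'
    exact hκ ((contraction_mem_layer_succ_iff hx).1 hx').1

theorem layerMass_eq_pow_mul (hI : I.Nonempty) (n : ℕ) :
    layerMass s μ I n = ((p : ENNReal) ^ (-(eexp I s).re)) ^ n * layerMass s μ I 0 := by
  induction n with
  | zero => simp
  | succ n ih => rw [layerMass_succ s μ hI, ih, ← mul_assoc, pow_succ']

theorem coulombMass_eq_geometric (hI : 1 < I.card) :
    coulombMass s (pairsIn I) μ =
      (1 - (p : ENNReal) ^ (-(eexp I s).re))⁻¹ * layerMass s μ I 0 := by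
  rw [coulombMass_eq_tsum_layerMass s μ hI, ← ENNReal.tsum_geometric, ← ENNReal.tsum_mul_right]
  exact tsum_congr (layerMass_eq_pow_mul s μ (Finset.card_pos.1 (zero_lt_one.trans hI)))

theorem exists_notMem_constOn_of_ssubset {K : Type*} [Fintype K] [DecidableEq K] [Nontrivial K]
    {J : Finset (Fin N)} (hJ : J.Nonempty) (hJI : J ⊂ I) :
    ∃ κ ∉ constOn K I, ∃ k, I.filter (fun i => κ i = k) = J := by
  obtain ⟨a, b, hab⟩ := exists_pair_ne K
  obtain ⟨j, hj⟩ := hJ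
  obtain ⟨i, hi, hiJ⟩ := Finset.exists_of_ssubset hJI
  refine ⟨fun i => if i ∈ J then a else b, fun h => hab ?_, a, ?_⟩
  · simpa [hj, hiJ] using mem_constOn.1 h j (hJI.1 hj) i hi
  · ext i
    have := @hJI.1 i
    by_cases hi : i ∈ J <;> simp_all [hab.symm]

theorem filter_ssubset_of_notMem_constOn {K : Type*} [Fintype K] [DecidableEq K] {κ : Fin N → K}
    (hκ : κ ∉ constOn K I) (k : K) : I.filter (fun i => κ i = k) ⊂ I := by
  refine Finset.filter_ssubset.2 ?_
  by_contra! h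
  exact hκ (mem_constOn.2 fun i hi j hj => (h i hi).trans (h j hj).symm)

theorem layerMass_zero_ne_top_iff :
    layerMass s μ I 0 ≠ ⊤ ↔ ∀ J ⊂ I, coulombMass s (pairsIn J) μ ≠ ⊤ := by
  have hp0 : (p : ENNReal) ≠ 0 := mod_cast (Fact.out : p.Prime).ne_zero
  have hpt := ENNReal.natCast_ne_top p
  have : Nontrivial (Fin p) := Fin.nontrivial_iff_two_le.2 (Fact.out : p.Prime).two_le
  have hc : (p : ENNReal)⁻¹ ^ N * (p : ENNReal) ^ (-(∑ q ∈ pairsIn I, s q.1 q.2).re) ≠ ⊤ :=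
    ENNReal.mul_ne_top (ENNReal.pow_ne_top (ENNReal.inv_ne_top.2 hp0))
      (ENNReal.rpow_ne_top_of_ne_zero hp0 hpt)
  have hc0 : (p : ENNReal)⁻¹ ^ N * (p : ENNReal) ^ (-(∑ q ∈ pairsIn I, s q.1 q.2).re) ≠ 0 :=
    mul_ne_zero (pow_ne_zero _ (ENNReal.inv_ne_zero.2 hpt))
      (ENNReal.rpow_pos (pos_iff_ne_zero.2 hp0) hpt).ne'
  have hiff : layerMass s μ I 0 ≠ ⊤ ↔ ∀ κ ∉ constOn (Fin p) I, ∀ k,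
      coulombMass s (pairsIn (I.filter fun i => κ i = k)) μ ≠ ⊤ := by
    rw [layerMass_zero, ne_eq, ENNReal.mul_eq_top]
    simp only [hc, hc0, false_and, or_false, ne_eq, not_false_eq_true, true_and, ENNReal.sum_eq_top,
      Finset.mem_compl, not_exists, not_and, ← coulombMass_filter_pairsIn_ne_top_iff]
  rw [hiff]
  refine ⟨fun h J hJ => ?_, fun h κ hκ k => h _ (filter_ssubset_of_notMem_constOn hκ k)⟩
  rcases J.eq_empty_or_nonempty with rfl | hne
  · rw [coulombMass_pairsIn_of_card_le_one s μ (Finset.card_empty.trans_le zero_le_one)]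
    exact ENNReal.one_ne_top
  · obtain ⟨κ, hκ, k, hk⟩ := exists_notMem_constOn_of_ssubset (K := Fin p) hne hJ
    exact hk ▸ h κ hκ k

theorem inOmega_iff_of_one_lt_card (hI : 1 < I.card) :
    InOmega I s ↔ 0 < (eexp I s).re ∧ ∀ J ⊂ I, InOmega J s := by
  refine ⟨fun h => ⟨h I subset_rfl hI, fun J hJ L hL => h L (hL.trans hJ.1)⟩, fun h L hL hc => ?_⟩
  rcases hL.eq_or_ssubset with rfl | hss
  · exact h.1
  · exact h.2 L hss L subset_rfl hc

theorem coulombMass_pairsIn_ne_top_iff_of_one_lt_card (hI : 1 < I.card) :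
    coulombMass s (pairsIn I) μ ≠ ⊤ ↔
      0 < (eexp I s).re ∧ ∀ J ⊂ I, coulombMass s (pairsIn J) μ ≠ ⊤ := by
  have hp1 : (1 : ENNReal) < p := mod_cast (Fact.out : p.Prime).one_lt
  have hratio : (1 - (p : ENNReal) ^ (-(eexp I s).re))⁻¹ ≠ ⊤ ↔ 0 < (eexp I s).re := by
    rw [ENNReal.inv_ne_top, ne_eq, tsub_eq_zero_iff_le, not_le]
    refine ⟨fun h => ?_, fun h => ENNReal.rpow_lt_one_of_one_lt_of_neg hp1 (neg_lt_zero.2 h)⟩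
    by_contra! h'
    exact h.not_ge (by simpa using ENNReal.rpow_le_rpow_of_exponent_le hp1.le (neg_nonneg.2 h'))
  have h0 := coulombMass_ne_zero s (pairsIn I) μ fun q => fst_ne_snd_of_mem_pairsIn
  rw [coulombMass_eq_geometric s μ hI] at h0 ⊢
  rw [← hratio, ← layerMass_zero_ne_top_iff, ne_eq, ENNReal.mul_eq_top]
  have hl := left_ne_zero_of_mul h0
  have hr := right_ne_zero_of_mul h0
  tauto

theorem coulombMass_pairsIn_ne_top_iff (I : Finset (Fin N)) :
    coulombMass s (pairsIn I) μ ≠ ⊤ ↔ InOmega I s := by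
  induction I using Finset.strongInduction with
  | H I ih =>
    rcases le_or_gt I.card 1 with hI | hI
    · rw [coulombMass_pairsIn_of_card_le_one s μ hI]
      exact iff_of_true ENNReal.one_ne_top fun J hJ hJ1 =>
        absurd (Finset.card_le_card hJ) (by omega)
    · rw [coulombMass_pairsIn_ne_top_iff_of_one_lt_card s μ hI, inOmega_iff_of_one_lt_card s hI]
      exact and_congr_right fun _ => forall₂_congr ih

end Convergence

section ProjectiveLine

variable {p : ℕ} [Fact p.Prime]

theorem isOpenQuotientMap_mk' :
    IsOpenQuotientMap (Projectivization.mk' ℚ_[p] : {v : Fin 2 → ℚ_[p] // v ≠ 0} → P1 p) := by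
  have hq : Topology.IsQuotientMap
      (Projectivization.mk' ℚ_[p] : {v : Fin 2 → ℚ_[p] // v ≠ 0} → P1 p) := isQuotientMap_quot_mk
  refine .of_isOpenMap_isQuotientMap (fun U hU => hq.isOpen_preimage.1 ?_) hq
  have hsat : Projectivization.mk' ℚ_[p] ⁻¹' (Projectivization.mk' ℚ_[p] '' U) =
      ⋃ c : ℚ_[p]ˣ, (fun v : {v : Fin 2 → ℚ_[p] // v ≠ 0} =>
        (⟨c • v.1, (smul_ne_zero_iff_ne c).2 v.2⟩ : {v : Fin 2 → ℚ_[p] // v ≠ 0})) ⁻¹' U := by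
    ext v
    simp only [Set.mem_preimage, Set.mem_image, Set.mem_iUnion, Projectivization.mk'_eq_mk,
      Projectivization.mk_eq_mk_iff]
    constructor
    · rintro ⟨w, hw, c, hc⟩
      exact ⟨c, (Subtype.ext hc : (⟨c • v.1, _⟩ : {v : Fin 2 → ℚ_[p] // v ≠ 0}) = w) ▸ hw⟩
    · rintro ⟨c, hc⟩
      exact ⟨_, hc, c, rfl⟩
  rw [hsat]
  exact isOpen_iUnion fun c => hU.preimage ((continuous_subtype_val.const_smul c).subtype_mk _)

theorem sdelta_smul_smul (a b : ℚ_[p]ˣ) (v w : Fin 2 → ℚ_[p]) :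
    sdelta p (a • v) (b • w) = sdelta p v w := by
  have ha : ‖(a : ℚ_[p])‖ ≠ 0 := norm_ne_zero_iff.2 a.ne_zero
  have hb : ‖(b : ℚ_[p])‖ ≠ 0 := norm_ne_zero_iff.2 b.ne_zero
  have hnum : (a : ℚ_[p]) * v 0 * (b * w 1) - a * v 1 * (b * w 0) =
      a * b * (v 0 * w 1 - v 1 * w 0) := by ring
  simp only [sdelta, Pi.smul_apply, Units.smul_def, smul_eq_mul, hnum, norm_mul,
    ← mul_max_of_nonneg _ _ (norm_nonneg _), mul_mul_mul_comm ‖(a : ℚ_[p])‖]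
  exact mul_div_mul_left _ _ (mul_ne_zero ha hb)

theorem pdelta_mk (v w : Fin 2 → ℚ_[p]) (hv : v ≠ 0) (hw : w ≠ 0) :
    pdelta p (Projectivization.mk ℚ_[p] v hv) (Projectivization.mk ℚ_[p] w hw) = sdelta p v w := by
  obtain ⟨a, ha⟩ := Projectivization.exists_smul_eq_mk_rep ℚ_[p] v hv
  obtain ⟨b, hb⟩ := Projectivization.exists_smul_eq_mk_rep ℚ_[p] w hw
  rw [pdelta, ← ha, ← hb, sdelta_smul_smul]

theorem max_norm_pos {v : Fin 2 → ℚ_[p]} (hv : v ≠ 0) : 0 < max ‖v 0‖ ‖v 1‖ := by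
  rw [lt_max_iff, norm_pos_iff, norm_pos_iff]
  by_contra! h
  exact hv (funext (Fin.forall_fin_two.2 h))

theorem continuous_pdelta : Continuous fun q : P1 p × P1 p => pdelta p q.1 q.2 := by
  have h := isOpenQuotientMap_mk' (p := p)
  rw [← (h.prodMap h).continuous_comp_iff]
  refine Continuous.congr (f := fun q => sdelta p q.1.1 q.2.1) ?_ fun q =>
    (pdelta_mk q.1.1 q.2.1 q.1.2 q.2.2).symm
  have hcoe : Continuous fun q : {v : Fin 2 → ℚ_[p] // v ≠ 0} × {v : Fin 2 → ℚ_[p] // v ≠ 0} =>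
      (q.1.1, q.2.1) := by fun_prop
  refine Continuous.div
    ((by fun_prop : Continuous fun u : (Fin 2 → ℚ_[p]) × (Fin 2 → ℚ_[p]) =>
      ‖u.1 0 * u.2 1 - u.1 1 * u.2 0‖).comp hcoe)
    ((by fun_prop : Continuous fun u : (Fin 2 → ℚ_[p]) × (Fin 2 → ℚ_[p]) =>
      max ‖u.1 0‖ ‖u.1 1‖ * max ‖u.2 0‖ ‖u.2 1‖).comp hcoe)
    fun q => (mul_pos (max_norm_pos q.1.2) (max_norm_pos q.2.2)).ne'

theorem mk_eq_mk_iff_det {K : Type*} [Field K] {v w : Fin 2 → K} (hv : v ≠ 0) (hw : w ≠ 0) :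
    Projectivization.mk K v hv = Projectivization.mk K w hw ↔ v 0 * w 1 - v 1 * w 0 = 0 := by
  have hdet : (Matrix.of ![w, v]).det = -(v 0 * w 1 - v 1 * w 0) := by
    rw [Matrix.det_fin_two]
    change w 0 * v 1 - w 1 * v 0 = _
    ring
  have hind := (LinearIndependent.pair_iff' (K := K) (y := v) hw).symm.trans
    (Matrix.linearIndependent_rows_iff_isUnit (A := Matrix.of ![w, v]))
  rw [Projectivization.mk_eq_mk_iff', ← neg_eq_zero, ← hdet, ← not_iff_not, ← ne_eq _ (0 : K),
    ← isUnit_iff_ne_zero, ← Matrix.isUnit_iff_isUnit_det, ← hind, not_exists]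

theorem pdelta_eq_zero_iff {ξ η : P1 p} : pdelta p ξ η = 0 ↔ ξ = η := by
  induction ξ using Projectivization.ind with | _ v hv =>
  induction η using Projectivization.ind with | _ w hw =>
  rw [pdelta_mk, sdelta, div_eq_zero_iff, mk_eq_mk_iff_det, norm_eq_zero,
    or_iff_left (mul_pos (max_norm_pos hv) (max_norm_pos hw)).ne']

local instance : SecondCountableTopology (P1 p) :=
  have h := isOpenQuotientMap_mk' (p := p)
  h.isQuotientMap.secondCountableTopology h.isOpenMap

theorem measurable_pdelta : Measurable fun q : P1 p × P1 p => pdelta p q.1 q.2 :=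
  continuous_pdelta.measurable

local instance : T2Space (P1 p) := by
  have hdiag : Set.diagonal (P1 p) = (fun q : P1 p × P1 p => pdelta p q.1 q.2) ⁻¹' {0} :=
    Set.ext fun _ => pdelta_eq_zero_iff.symm
  rw [t2_iff_isClosed_diagonal, hdiag]
  exact isClosed_singleton.preimage continuous_pdelta

theorem mobius_mk {A : Matrix (Fin 2) (Fin 2) ℚ_[p]} (hA : A.det ≠ 0) {v : Fin 2 → ℚ_[p]}
    (hv : v ≠ 0) : mobius p A (Projectivization.mk ℚ_[p] v hv) =
      Projectivization.mk ℚ_[p] (A.mulVec v) (mt (Matrix.eq_zero_of_mulVec_eq_zero hA) hv) := by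
  obtain ⟨a, ha⟩ := Projectivization.exists_smul_eq_mk_rep ℚ_[p] v hv
  rw [mobius, dif_pos (mt (Matrix.eq_zero_of_mulVec_eq_zero hA) (Projectivization.rep_nonzero _)),
    Projectivization.mk_eq_mk_iff]
  exact ⟨a, by rw [← ha, Units.smul_def, Matrix.mulVec_smul, Units.smul_def]⟩

theorem continuous_mobius {A : Matrix (Fin 2) (Fin 2) ℚ_[p]} (hA : A.det ≠ 0) :
    Continuous (mobius p A) := by
  have h := isOpenQuotientMap_mk' (p := p)
  rw [← h.continuous_comp_iff]
  refine Continuous.congr (h.continuous.comp (Continuous.subtype_mk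
    (f := fun v : {v : Fin 2 → ℚ_[p] // v ≠ 0} => A.mulVec v) (by fun_prop)
    fun v => mt (Matrix.eq_zero_of_mulVec_eq_zero hA) v.2)) fun v => (mobius_mk hA v.2).symm

theorem mobius_injective {A : Matrix (Fin 2) (Fin 2) ℚ_[p]} (hA : A.det ≠ 0) :
    Function.Injective (mobius p A) := by
  intro ξ η h
  induction ξ using Projectivization.ind with | _ v hv =>
  induction η using Projectivization.ind with | _ w hw =>
  rw [mobius_mk hA, mobius_mk hA, Projectivization.mk_eq_mk_iff'] at h
  obtain ⟨a, ha⟩ := h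
  refine (Projectivization.mk_eq_mk_iff' ..).2
    ⟨a, Matrix.mulVec_injective_of_isUnit ((Matrix.isUnit_iff_isUnit_det A).2 hA.isUnit) ?_⟩
  rw [Matrix.mulVec_smul, ha]

theorem continuous_iota : Continuous (iota p) :=
  isOpenQuotientMap_mk'.continuous.comp <|
    Continuous.subtype_mk (f := fun x : ℚ_[p] => ![x, 1]) (by fun_prop) _

theorem iota_injective : Function.Injective (iota p) := fun x y h => by
  simpa [sub_eq_zero] using (mk_eq_mk_iff_det _ _).1 h

theorem measurableEmbedding_iota : MeasurableEmbedding (iota p) :=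
  continuous_iota.measurableEmbedding iota_injective

theorem measurableEmbedding_mobius_comp_iota {A : Matrix (Fin 2) (Fin 2) ℚ_[p]}
    (hA : A.det ≠ 0) : MeasurableEmbedding fun x => mobius p A (iota p x) :=
  ((continuous_mobius hA).comp continuous_iota).measurableEmbedding
    ((mobius_injective hA).comp iota_injective)

section Invariance

variable {ν : Measure (P1 p)}

theorem comap_mobius_comp_iota (hν : IsGLInvariant p ν) {A : Matrix (Fin 2) (Fin 2) ℚ_[p]}
    (hA : ∀ i j, ‖A i j‖ ≤ 1) (hdet : ‖A.det‖ = 1) :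
    ν.comap (fun x => mobius p A (iota p x)) = ν.comap (iota p) := by
  have hne : A.det ≠ 0 := norm_ne_zero_iff.1 (hdet.trans_ne one_ne_zero)
  ext S hS
  rw [(measurableEmbedding_mobius_comp_iota hne).comap_apply, measurableEmbedding_iota.comap_apply,
    ← hν A hA hdet _ (measurableEmbedding_iota.measurableSet_image.2 hS), Set.image_image]

theorem mobius_translation_iota (x y : ℚ_[p]) :
    mobius p !![1, y; 0, 1] (iota p x) = iota p (x + y) := by
  rw [iota, mobius_mk (by simp), iota, mk_eq_mk_iff_det]
  simp

theorem map_add_right_comap_iota (hν : IsGLInvariant p ν) {y : ℚ_[p]} (hy : ‖y‖ ≤ 1) :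
    (ν.comap (iota p)).map (· + y) = ν.comap (iota p) := by
  have hadd := measurableEmbedding_addRight y
  have hcomap : ν.comap (iota p) = (ν.comap (iota p)).comap (· + y) := by
    rw [Measure.comap_comap (fun _ => hadd.measurableSet_image.2) iota_injective
      fun _ => measurableEmbedding_iota.measurableSet_image.2,
      ← comap_mobius_comp_iota hν (A := !![1, y; 0, 1]) ?_ (by simp)]
    · simp_rw [mobius_translation_iota, Function.comp_def]
    · intro i j
      fin_cases i <;> fin_cases j <;> simp [hy]
  conv_lhs => rw [hcomap, hadd.map_comap]
  rw [(add_right_surjective y).range_eq, Measure.restrict_univ]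

end Invariance

section Charts

/-- The matrix in `GL₂(ℤ_p)` carrying the disc `{[x : 1] : x ∈ pℤ_p}` onto the `k`-th of the
`p + 1` residue discs of the projective line, the last of which is that of `[1 : 0]`. -/
def chartMatrix : Fin (p + 1) → Matrix (Fin 2) (Fin 2) ℚ_[p] :=
  Fin.lastCases !![0, 1; 1, 0] fun a => !![1, (a : ℕ); 0, 1]

/-- The coordinate on the `k`-th residue disc of the projective line. -/
def chart (k : Fin (p + 1)) (x : ℚ_[p]) : P1 p := mobius p (chartMatrix k) (iota p x)

theorem norm_chartMatrix_le_one (k : Fin (p + 1)) (i j : Fin 2) :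
    ‖(chartMatrix k i j : ℚ_[p])‖ ≤ 1 := by
  cases k using Fin.lastCases with
  | last => fin_cases i <;> fin_cases j <;> simp [chartMatrix]
  | cast a =>
    fin_cases i <;> fin_cases j <;> simp [chartMatrix, IsUltrametricDist.norm_natCast_le_one]

theorem norm_det_chartMatrix (k : Fin (p + 1)) : ‖(chartMatrix k : Matrix _ _ ℚ_[p]).det‖ = 1 := by
  cases k using Fin.lastCases <;> simp [chartMatrix]

theorem det_chartMatrix_ne_zero (k : Fin (p + 1)) : (chartMatrix k : Matrix _ _ ℚ_[p]).det ≠ 0 :=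
  norm_ne_zero_iff.1 ((norm_det_chartMatrix k).trans_ne one_ne_zero)

theorem chart_castSucc (a : Fin p) (x : ℚ_[p]) : chart a.castSucc x = iota p (x + (a : ℕ)) := by
  rw [chart, chartMatrix, Fin.lastCases_castSucc, mobius_translation_iota]

theorem chart_last (x : ℚ_[p]) :
    chart (Fin.last p) x = Projectivization.mk ℚ_[p] ![1, x] (by simp) := by
  rw [chart, iota, mobius_mk (det_chartMatrix_ne_zero _), mk_eq_mk_iff_det]
  simp [chartMatrix]

theorem measurableEmbedding_chart (k : Fin (p + 1)) :
    MeasurableEmbedding (chart k : ℚ_[p] → P1 p) :=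
  measurableEmbedding_mobius_comp_iota (det_chartMatrix_ne_zero k)

theorem pdelta_iota_of_norm_le_one {x y : ℚ_[p]} (hx : ‖x‖ ≤ 1) (hy : ‖y‖ ≤ 1) :
    pdelta p (iota p x) (iota p y) = ‖x - y‖ := by
  simp [iota, pdelta_mk, sdelta, hx, hy]

theorem pdelta_chart_chart (k : Fin (p + 1)) {x y : ℚ_[p]} (hx : x ∈ Pball p) (hy : y ∈ Pball p) :
    pdelta p (chart k x) (chart k y) = ‖x - y‖ := by
  cases k using Fin.lastCases with
  | last =>
    simp [chart_last, pdelta_mk, sdelta, le_of_lt hx.out, le_of_lt hy.out, norm_sub_rev]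
  | cast a =>
    rw [chart_castSucc, chart_castSucc, pdelta_iota_of_norm_le_one (norm_add_natCast_le_one hx a)
      (norm_add_natCast_le_one hy a), add_sub_add_right_eq_sub]

theorem pdelta_comm (ξ η : P1 p) : pdelta p ξ η = pdelta p η ξ := by
  rw [pdelta, pdelta, sdelta, sdelta, norm_sub_rev, mul_comm (max _ _)]
  simp only [mul_comm]

theorem pdelta_iota_chart_last {x y : ℚ_[p]} (hx : ‖x‖ ≤ 1) (hy : y ∈ Pball p) :
    pdelta p (iota p x) (chart (Fin.last p) y) = 1 := by
  have hxy : ‖x * y‖ < 1 := by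
    rw [norm_mul]
    exact mul_lt_one_of_nonneg_of_lt_one_right hx (norm_nonneg y) hy
  have h : ‖x * y - 1‖ = 1 := by
    rw [sub_eq_add_neg, IsUltrametricDist.norm_add_eq_max_of_norm_ne_norm (by simpa using hxy.ne),
      norm_neg, norm_one, max_eq_right hxy.le]
  simp [chart_last, iota, pdelta_mk, sdelta, hx, le_of_lt hy.out, h]

theorem pdelta_chart_chart_of_ne {k l : Fin (p + 1)} (hkl : k ≠ l) {x y : ℚ_[p]}
    (hx : x ∈ Pball p) (hy : y ∈ Pball p) : pdelta p (chart k x) (chart l y) = 1 := by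
  cases k using Fin.lastCases with
  | last =>
    cases l using Fin.lastCases with
    | last => exact absurd rfl hkl
    | cast b =>
      rw [pdelta_comm, chart_castSucc, pdelta_iota_chart_last (norm_add_natCast_le_one hy b) hx]
  | cast a =>
    cases l using Fin.lastCases with
    | last => rw [chart_castSucc, pdelta_iota_chart_last (norm_add_natCast_le_one hx a) hy]
    | cast b =>
      rw [chart_castSucc, chart_castSucc, pdelta_iota_of_norm_le_one
        (norm_add_natCast_le_one hx a) (norm_add_natCast_le_one hy b)]
      exact norm_add_natCast_sub_add_natCast_of_ne (fun h => hkl (congrArg _ h)) hx hy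

theorem disjoint_chart_image_Pball {k l : Fin (p + 1)} (hkl : k ≠ l) :
    Disjoint (chart k '' Pball p) (chart l '' Pball p) := by
  rw [Set.disjoint_left]
  rintro _ ⟨x, hx, rfl⟩ ⟨y, hy, h⟩
  exact one_ne_zero ((pdelta_chart_chart_of_ne hkl hx hy).symm.trans (pdelta_eq_zero_iff.2 h.symm))

theorem iUnion_chart_image_Pball : ⋃ k, chart k '' Pball p = Set.univ := by
  refine Set.eq_univ_of_forall fun ξ => Set.mem_iUnion.2 ?_
  induction ξ using Projectivization.ind with | _ v hv =>
  rcases le_or_gt ‖v 0‖ ‖v 1‖ with h | h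
  · have h1 : v 1 ≠ 0 := norm_pos_iff.1 (max_eq_right h ▸ max_norm_pos hv)
    have hdiv : v 0 / v 1 ∈ Zball p :=
      (norm_div _ _).trans_le (div_le_one_of_le₀ h (norm_nonneg _))
    obtain ⟨a, ha⟩ := exists_sub_natCast_mem_Pball hdiv
    refine ⟨a.castSucc, _, ha, ?_⟩
    rw [chart_castSucc, sub_add_cancel, iota, mk_eq_mk_iff_det]
    simp [h1]
  · have h0 : v 0 ≠ 0 := norm_pos_iff.1 ((norm_nonneg _).trans_lt h)
    refine ⟨Fin.last p, v 1 / v 0,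
      (norm_div _ _).trans_lt ((div_lt_one (norm_pos_iff.2 h0)).2 h), ?_⟩
    rw [chart_last, mk_eq_mk_iff_det]
    simp [h0]

end Charts

theorem restrict_comap_iota_eq_smul (μ : Measure ℚ_[p]) [μ.IsAddHaarMeasure] {ν : Measure (P1 p)}
    [IsFiniteMeasure ν] (hν : IsGLInvariant p ν) :
    (ν.comap (iota p)).restrict (Pball p) = ν.comap (iota p) (Pball p) • ballMeasure μ := by
  have hinv : ∀ y ∈ Pball p, ((ν.comap (iota p)).restrict (Pball p)).map (· + y) =
      (ν.comap (iota p)).restrict (Pball p) := fun y hy => by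
    have hy' := map_add_right_comap_iota hν (le_of_lt hy)
    rw [← coe_ball_openAddSubgroup] at hy ⊢
    exact map_add_right_restrict hy' hy
  have h := smul_eq_smul_of_ae_map_add_right (m := (ν.comap (iota p)).restrict (Pball p))
    ((ae_ballMeasure_mem μ).mono hinv) <| by
      filter_upwards [ae_restrict_mem isOpen_Pball.measurableSet] with y hy
      exact map_add_right_ballMeasure μ hy
  rwa [measure_univ, one_smul, Measure.restrict_apply_univ] at h

theorem eq_smul_sum_map_chart (μ : Measure ℚ_[p]) [μ.IsAddHaarMeasure] {ν : Measure (P1 p)}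
    [IsProbabilityMeasure ν] (hν : IsGLInvariant p ν) :
    ν = (p + 1 : ENNReal)⁻¹ • ∑ k : Fin (p + 1), (ballMeasure μ).map (chart k) := by
  have hcomap : ∀ k : Fin (p + 1), ν.comap (chart k) = ν.comap (iota p) := fun k =>
    comap_mobius_comp_iota hν (norm_chartMatrix_le_one k) (norm_det_chartMatrix k)
  have hdecomp : ν = ν.comap (iota p) (Pball p) •
      ∑ k : Fin (p + 1), (ballMeasure μ).map (chart k) := by
    conv_lhs =>
      rw [← Measure.restrict_univ (μ := ν), ← iUnion_chart_image_Pball,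
        restrict_iUnion_image ν measurableEmbedding_chart isOpen_Pball.measurableSet
          fun k l => disjoint_chart_image_Pball]
    simp_rw [hcomap, restrict_comap_iota_eq_smul μ hν, Measure.map_smul, Finset.smul_sum]
  have hmass : ν.comap (iota p) (Pball p) * (p + 1) = 1 := by
    have h := congrArg (fun m => m Set.univ) hdecomp
    simpa [Measure.finsetSum_apply, Measure.map_apply (measurableEmbedding_chart _).measurable,
      eq_comm] using h
  rwa [ENNReal.eq_inv_of_mul_eq_one_left hmass] at hdecomp

end ProjectiveLine

section Decomposition

variable {p : ℕ} [Fact p.Prime] {N : ℕ}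

/-- The integrand `∏_{i<j} δ(ξ_i, ξ_j)^{s_ij}` of the partition function of the projective line. -/
def sphericalCoulomb (s : Fin N → Fin N → ℂ) (ξ : Fin N → P1 p) : ℂ :=
  ∏ q ∈ pairs N, ((pdelta p (ξ q.1) (ξ q.2) : ℝ) : ℂ) ^ s q.1 q.2

/-- The configuration on the projective line whose `i`-th point has coordinate `x i` in the
`κ i`-th chart. -/
def piChart (κ : Fin N → Fin (p + 1)) (x : Fin N → ℚ_[p]) (i : Fin N) : P1 p :=
  chart (κ i) (x i)

theorem measurable_piChart (κ : Fin N → Fin (p + 1)) : Measurable (piChart κ) :=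
  measurable_pi_lambda _ fun i =>
    (measurableEmbedding_chart (κ i)).measurable.comp (measurable_pi_apply i)

theorem sphericalCoulomb_piChart (s : Fin N → Fin N → ℂ) (κ : Fin N → Fin (p + 1))
    {x : Fin N → ℚ_[p]} (hx : ∀ i, x i ∈ Pball p) :
    sphericalCoulomb s (piChart κ x) =
      coulomb s ((pairsIn Finset.univ).filter fun q => κ q.1 = κ q.2) x := by
  rw [sphericalCoulomb, coulomb, pairsIn_univ, Finset.prod_filter]
  refine Finset.prod_congr rfl fun q _ => ?_
  split_ifs with hq
  · rw [piChart, piChart, hq, pdelta_chart_chart _ (hx _) (hx _)]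
  · rw [piChart, piChart, pdelta_chart_chart_of_ne hq (hx _) (hx _), Complex.ofReal_one,
      Complex.one_cpow]

section Convergence

variable (s : Fin N → Fin N → ℂ)

theorem measurable_sphericalCoulomb : Measurable (sphericalCoulomb (p := p) s) := by
  have hpair (i j : Fin N) : Measurable fun ξ : Fin N → P1 p => (ξ i, ξ j) := by fun_prop
  refine Finset.measurable_fun_prod (pairs N) fun q _ => ?_
  exact (Complex.measurable_ofReal.comp (measurable_pdelta.comp (hpair q.1 q.2))).pow_const _

variable (μ : Measure ℚ_[p]) [μ.IsAddHaarMeasure]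

theorem sphericalCoulomb_comp_piChart_ae_eq (κ : Fin N → Fin (p + 1)) :
    sphericalCoulomb s ∘ piChart κ =ᵐ[Measure.pi fun _ => ballMeasure μ]
      coulomb s ((pairsIn Finset.univ).filter fun q => κ q.1 = κ q.2) := by
  filter_upwards [ae_pi_ballMeasure_mem μ] with x hx
  exact sphericalCoulomb_piChart s κ hx

theorem integrable_sphericalCoulomb_map_piChart_iff (κ : Fin N → Fin (p + 1)) :
    Integrable (sphericalCoulomb s) ((Measure.pi fun _ => ballMeasure μ).map (piChart κ)) ↔
      ∀ k, InOmega (Finset.univ.filter fun i => κ i = k) s := by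
  rw [integrable_map_measure (measurable_sphericalCoulomb s).aestronglyMeasurable
    (measurable_piChart κ).aemeasurable,
    integrable_congr (sphericalCoulomb_comp_piChart_ae_eq s μ κ), integrable_coulomb_iff,
    coulombMass_filter_pairsIn_ne_top_iff]
  simp_rw [coulombMass_pairsIn_ne_top_iff]

theorem inOmega_univ_iff_forall_fiber {K : Type*} [DecidableEq K] [Nonempty K] :
    InOmega Finset.univ s ↔
      ∀ (κ : Fin N → K) k, InOmega (Finset.univ.filter fun i => κ i = k) s := by
  refine ⟨fun hs κ k J _ => hs J (Finset.subset_univ J), fun h => ?_⟩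
  obtain ⟨k⟩ := ‹Nonempty K›
  simpa using h (fun _ => k) k

variable {ν : Measure (P1 p)} [IsProbabilityMeasure ν]

theorem pi_eq_smul_sum_map_piChart (hν : IsGLInvariant p ν) :
    Measure.pi (fun _ : Fin N => ν) = (p + 1 : ENNReal)⁻¹ ^ N •
      ∑ κ : Fin N → Fin (p + 1), (Measure.pi fun _ => ballMeasure μ).map (piChart κ) := by
  rw [pi_smul_sum_map (fun k => (measurableEmbedding_chart k).measurable)
    (eq_smul_sum_map_chart μ hν), Fintype.card_fin]
  rfl

theorem integrable_sphericalCoulomb_iff (hν : IsGLInvariant p ν) :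
    Integrable (sphericalCoulomb s) (Measure.pi fun _ => ν) ↔ InOmega Finset.univ s := by
  rw [pi_eq_smul_sum_map_piChart Measure.addHaar hν,
    integrable_smul_measure (by simp) (by simp), integrable_finsetSum_measure,
    inOmega_univ_iff_forall_fiber s (K := Fin (p + 1))]
  simp_rw [integrable_sphericalCoulomb_map_piChart_iff, Finset.mem_univ, true_imp_iff]

end Convergence

section Value

variable (s : Fin N → Fin N → ℂ) (μ : Measure ℚ_[p]) [μ.IsAddHaarMeasure]

theorem pi_restrict_Pball_eq_smul [SigmaFinite μ] {ι : Type*} [Fintype ι] :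
    Measure.pi (fun _ : ι => μ.restrict (Pball p)) =
      μ (Pball p) ^ Fintype.card ι • Measure.pi fun _ => ballMeasure μ :=
  Measure.pi_eq fun t _ => by simp [restrict_Pball_eq_smul, Finset.prod_mul_distrib]

theorem ZI_Pball_eq_mul_integral [SigmaFinite μ] (I : Finset (Fin N)) :
    ZI p μ (Pball p) I s = (μ.real (Pball p) : ℂ) ^ I.card *
      ∫ x, coulomb s (pairsIn I) x ∂Measure.pi fun _ => ballMeasure μ := by
  have hmarginal : (Measure.pi fun _ : Fin N => ballMeasure μ).map I.restrict =
      Measure.pi fun _ => ballMeasure μ := by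
    rw [← Measure.infinitePi_eq_pi, Measure.infinitePi_map_restrict]
  simp_rw [coulomb_pairsIn_eq_restrict]
  rw [← integral_map (by fun_prop) (measurable_coulomb _ _).aestronglyMeasurable, hmarginal, ZI,
    pi_restrict_Pball_eq_smul, integral_smul_measure, Fintype.card_coe, ENNReal.toReal_pow,
    Complex.real_smul, Complex.ofReal_pow]
  rfl

theorem prod_ZI_Pball_fiber [SigmaFinite μ] {K : Type*} [Fintype K] [DecidableEq K]
    (κ : Fin N → K) :
    ∏ k, ZI p μ (Pball p) (Finset.univ.filter fun i => κ i = k) s = (μ.real (Pball p) : ℂ) ^ N *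
      ∫ x, coulomb s ((pairsIn Finset.univ).filter fun q => κ q.1 = κ q.2) x
        ∂Measure.pi fun _ => ballMeasure μ := by
  have hcard : ∑ k, (Finset.univ.filter fun i => κ i = k).card = N := by
    rw [← Finset.card_eq_sum_card_fiberwise fun _ _ => Finset.mem_univ _, Finset.card_fin]
  have hind := iIndepFun_coulomb s μ (pairwise_disjoint_filter_eq Finset.univ κ)
  simp_rw [ZI_Pball_eq_mul_integral, Finset.prod_mul_distrib, Finset.prod_pow_eq_pow_sum, hcard,
    coulomb_filter_pairsIn]
  rw [hind.integral_fun_prod_eq_prod_integral fun k =>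
    (measurable_coulomb s _).aestronglyMeasurable]

theorem measureReal_Pball (hμ : μ (Zball p) = 1) : μ.real (Pball p) = (p : ℝ)⁻¹ := by
  rw [measure_Zball, mul_comm] at hμ
  rw [measureReal_def, ENNReal.eq_inv_of_mul_eq_one_left hμ, ENNReal.toReal_inv,
    ENNReal.toReal_natCast]

theorem integral_sphericalCoulomb_map_piChart [SigmaFinite μ] (hμ : μ (Zball p) = 1)
    (κ : Fin N → Fin (p + 1)) :
    ∫ ξ, sphericalCoulomb s ξ ∂(Measure.pi fun _ => ballMeasure μ).map (piChart κ) =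
      (p : ℂ) ^ N * ∏ k, ZI p μ (Pball p) (Finset.univ.filter fun i => κ i = k) s := by
  have hp : (p : ℂ) ≠ 0 := mod_cast (Fact.out : p.Prime).ne_zero
  rw [integral_map (measurable_piChart κ).aemeasurable
    (measurable_sphericalCoulomb s).aestronglyMeasurable, prod_ZI_Pball_fiber,
    measureReal_Pball μ hμ, ← mul_assoc, ← mul_pow, Complex.ofReal_inv, Complex.ofReal_natCast,
    mul_inv_cancel₀ hp, one_pow, one_mul]
  exact integral_congr_ae (sphericalCoulomb_comp_piChart_ae_eq s μ κ)

theorem ZP1s_eq_sum_prod_ZI [SigmaFinite μ] (hμ : μ (Zball p) = 1) {ν : Measure (P1 p)}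
    [IsProbabilityMeasure ν] (hν : IsGLInvariant p ν) (hs : InOmega Finset.univ s) :
    ZP1s p ν N s = ((p : ℂ) / ((p : ℂ) + 1)) ^ N * ∑ κ : Fin N → Fin (p + 1),
      ∏ k, ZI p μ (Pball p) (Finset.univ.filter fun i => κ i = k) s := by
  have hint : ∀ κ ∈ (Finset.univ : Finset (Fin N → Fin (p + 1))), Integrable (sphericalCoulomb s)
      ((Measure.pi fun _ => ballMeasure μ).map (piChart κ)) := fun κ _ =>
    (integrable_sphericalCoulomb_map_piChart_iff s μ κ).2
      ((inOmega_univ_iff_forall_fiber s).1 hs κ)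
  have hcoeff : ((p + 1 : ENNReal)⁻¹ ^ N).toReal = ((p : ℝ) + 1)⁻¹ ^ N := by
    rw [ENNReal.toReal_pow, ENNReal.toReal_inv, ENNReal.toReal_add (by simp) (by simp),
      ENNReal.toReal_natCast, ENNReal.toReal_one]
  change ∫ ξ, sphericalCoulomb s ξ ∂_ = _
  rw [pi_eq_smul_sum_map_piChart μ hν, integral_smul_measure, integral_finsetSum_measure hint]
  simp_rw [integral_sphericalCoulomb_map_piChart s μ hμ]
  rw [← Finset.mul_sum, hcoeff, Complex.real_smul, ← mul_assoc, div_eq_inv_mul, mul_pow]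
  push_cast
  rfl

end Value

section LabelledPartitions

variable {ι K : Type*} [Fintype ι] [DecidableEq K]

theorem fiber_injective :
    Function.Injective fun (κ : ι → K) k => Finset.univ.filter fun i => κ i = k := by
  intro κ κ' h
  funext i
  have hi : i ∈ Finset.univ.filter fun j => κ' j = κ i := by
    simp [← congrFun h (κ i)]
  exact (Finset.mem_filter.1 hi).2.symm

theorem setOf_disjoint_cover_eq_range_fiber :
    {J : K → Finset ι | (∀ k l, k ≠ l → Disjoint (J k) (J l)) ∧ ∀ i, ∃ k, i ∈ J k} =
      Set.range fun (κ : ι → K) k => Finset.univ.filter fun i => κ i = k := by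
  ext J
  refine ⟨fun ⟨hdisj, hcover⟩ => ?_, ?_⟩
  · choose κ hκ using hcover
    refine ⟨κ, funext fun k => Finset.ext fun i => ?_⟩
    simp only [Finset.mem_filter, Finset.mem_univ, true_and]
    refine ⟨fun h => h ▸ hκ i, fun hi => ?_⟩
    by_contra hne
    exact Finset.disjoint_left.1 (hdisj _ _ hne) (hκ i) hi
  · rintro ⟨κ, rfl⟩
    exact ⟨pairwise_disjoint_filter_eq Finset.univ κ, fun i => ⟨κ i, by simp⟩⟩

theorem finsum_mem_disjoint_cover [DecidableEq ι] [Fintype K] {M : Type*} [AddCommMonoid M]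
    (f : (K → Finset ι) → M) :
    ∑ᶠ J ∈ {J : K → Finset ι | (∀ k l, k ≠ l → Disjoint (J k) (J l)) ∧ ∀ i, ∃ k, i ∈ J k}, f J =
      ∑ κ : ι → K, f fun k => Finset.univ.filter fun i => κ i = k := by
  rw [setOf_disjoint_cover_eq_range_fiber, finsum_mem_range fiber_injective,
    finsum_eq_sum_of_fintype]

end LabelledPartitions

end Decomposition

end

theorem statement_8 (p : ℕ) [Fact p.Prime] (N : ℕ) (hN : 2 ≤ N)
    (μ : Measure ℚ_[p]) [SigmaFinite μ] [μ.IsAddHaarMeasure] (hμ : μ (Zball p) = 1)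
    (ν : Measure (P1 p)) [IsProbabilityMeasure ν] (hν : IsGLInvariant p ν)
    (s : Fin N → Fin N → ℂ) :
    (Integrable
        (fun x : Fin N → P1 p =>
          ∏ q ∈ pairs N, ((pdelta p (x q.1) (x q.2) : ℝ) : ℂ) ^ s q.1 q.2)
        (Measure.pi fun _ => ν) ↔ InOmega Finset.univ s) ∧
    (InOmega Finset.univ s →
      ZP1s p ν N s =
        ((p : ℂ) / ((p : ℂ) + 1)) ^ N *
          ∑ᶠ J ∈ {J : Fin (p + 1) → Finset (Fin N) |
              (∀ k l, k ≠ l → Disjoint (J k) (J l)) ∧ ∀ i, ∃ k, i ∈ J k},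
            ∏ k, ZI p μ (Pball p) (J k) s) := by
  refine ⟨integrable_sphericalCoulomb_iff s hν, fun hs => ?_⟩
  rw [finsum_mem_disjoint_cover]
  exact ZP1s_eq_sum_prod_ZI s μ hμ hν hs

end LogCoulomb
end
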